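/- arXiv:2102.07080 — 4 statements merged into one kernel-verified Lean document; each statement's English description precedes it below -/
import Mathlib

section
/- Let 𝔞 be a cofinite monomial ideal in k[x₁,…,x_d]. For every c ∈ (0,1] the limit ρ_c := lim_{n→∞} m(c+n)/n^{d−1} exists; ρ_c = 0 for all but finitely many c ∈ (0,1]; and the sum over all c ∈ (0,1] of ρ_c equals d · vol(ℝ_{≥0}^d \ P(𝔞)). (Monomial case of Theorem 4.10, using that the Hilbert–Samuel multiplicity of a cofinite monomial ideal equals d! times the volume of the complement of its Newton polyhedron in the first orthant.) -/
open Set Filter Pointwise MeasureTheory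

/-- The map sending a vector of natural number exponents to the corresponding
real vector. -/
noncomputable def expToReal (d : ℕ) (v : Fin d → ℕ) : Fin d → ℝ := fun i => (v i : ℝ)

/-- The Newton polyhedron of a monomial ideal with exponent set `S`:
the convex hull in `ℝ^d` of the exponent vectors. -/
noncomputable def newtonPoly (d : ℕ) (S : Set (Fin d → ℕ)) : Set (Fin d → ℝ) :=
  convexHull ℝ (expToReal d '' S)

/-- The multiplicity `m(c)` of `c > 0` as a (candidate) jumping number of the monomial
ideal with exponent set `S`: the number of `v ∈ ℕ^d` with `v + 𝟏` on the boundary part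
`c•P(𝔞) \ int(c•P(𝔞))` of the dilated Newton polyhedron. -/
noncomputable def multJump (d : ℕ) (S : Set (Fin d → ℕ)) (c : ℝ) : ℕ :=
  Nat.card {v : Fin d → ℕ |
    expToReal d v + 1 ∈ c • newtonPoly d S \ interior (c • newtonPoly d S)}

/-!
Let `ψ v` be the jumping number of the monomial `x^v`, the largest `c` with `v + 𝟏 ∈ c • P(𝔞)`, so
that `m(c)` counts the monomials with `ψ v = c`. Multiplying by a minimal generator of `𝔞` raises
`ψ` by at least one, and once `ψ v` exceeds the number of generators, some generator can be removed
from `x^v` so as to lower `ψ` by exactly one: among the weights of a convex combination, one is at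
least the reciprocal of their number (Skoda's theorem). Hence, for fixed `c`, the monomials with
`ψ v ∈ c + ℕ` form a Noetherian graded module over the polynomial ring whose variables are the
generators, and `m(c + n)` is eventually polynomial in `n`. For the same reason only finitely many
classes of `c` modulo `1` occur.

On the other hand, the monomials with `ψ v ≤ n` correspond to the lattice points of
`n • (ℝ_{>0}^d \ int P(𝔞))`, so their number grows like `vol(ℝ_{≥0}^d \ P(𝔞)) * n^d`. This number
is eventually polynomial too, since its increment from `n` to `n + 1` is the sum of `m(c + n)` over
the classes `c`; that sum therefore grows like the derivative `d * vol(ℝ_{≥0}^d \ P(𝔞)) * n^(d-1)`.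
-/

section EventuallyPolynomial

open Polynomial

/-- The sequence `f` agrees with a polynomial for all large indices, as Hilbert functions do. -/
def IsEventuallyPolynomial {K : Type*} [Semiring K] (f : ℕ → K) : Prop :=
  ∃ q : K[X], ∀ᶠ n : ℕ in atTop, f n = q.eval (n : K)

namespace IsEventuallyPolynomial

theorem of_eventually_eq_const {K : Type*} [Semiring K] {f : ℕ → K} {a : K}
    (h : ∀ᶠ n in atTop, f n = a) : IsEventuallyPolynomial f :=
  ⟨C a, h.mono fun n hn => by rw [hn, eval_C]⟩

theorem add {K : Type*} [Semiring K] {f g : ℕ → K} :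
    IsEventuallyPolynomial f → IsEventuallyPolynomial g → IsEventuallyPolynomial (f + g) := by
  rintro ⟨p, hp⟩ ⟨q, hq⟩
  refine ⟨p + q, ?_⟩
  filter_upwards [hp, hq] with n hpn hqn
  rw [Pi.add_apply, hpn, hqn, eval_add]

theorem sub {K : Type*} [Ring K] {f g : ℕ → K} :
    IsEventuallyPolynomial f → IsEventuallyPolynomial g → IsEventuallyPolynomial (f - g) := by
  rintro ⟨p, hp⟩ ⟨q, hq⟩
  refine ⟨p - q, ?_⟩
  filter_upwards [hp, hq] with n hpn hqn
  rw [Pi.sub_apply, hpn, hqn, eval_sub]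

theorem sum {K : Type*} [Semiring K] {ι : Type*} {s : Finset ι} {f : ι → ℕ → K}
    (h : ∀ i ∈ s, IsEventuallyPolynomial (f i)) : IsEventuallyPolynomial (∑ i ∈ s, f i) :=
  Finset.sum_induction f _ (fun _ _ => add)
    (of_eventually_eq_const (a := 0) (.of_forall fun _ => rfl)) h

theorem comp_succ {K : Type*} [CommSemiring K] {f : ℕ → K} :
    IsEventuallyPolynomial f → IsEventuallyPolynomial fun n => f (n + 1) := by
  rintro ⟨q, hq⟩
  refine ⟨taylor 1 q, ((tendsto_add_atTop_nat 1).eventually hq).mono fun n hn => ?_⟩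
  rw [taylor_eval, ← Nat.cast_add_one]
  exact hn

end IsEventuallyPolynomial

theorem exists_taylor_one_sub_eq {K : Type*} [Field K] [CharZero K] (p : K[X]) :
    ∃ q : K[X], taylor 1 q - q = p := by
  induction p using Polynomial.induction_on' with
  | add p₁ p₂ h₁ h₂ =>
    obtain ⟨⟨q₁, rfl⟩, ⟨q₂, rfl⟩⟩ := And.intro h₁ h₂
    exact ⟨q₁ + q₂, by rw [map_add]; ring⟩
  | monomial n a =>
    let B : K[X] := (Polynomial.bernoulli (n + 1)).map (algebraMap ℚ K)
    have hB : taylor 1 B - B = ((n : K[X]) + 1) * X ^ n := by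
      have := congrArg (Polynomial.map (algebraMap ℚ K)) (bernoulli_comp_one_add_X (n + 1))
      rw [Polynomial.map_comp] at this
      simp only [Polynomial.map_add, Polynomial.map_one, Polynomial.map_X, Polynomial.map_pow,
        nsmul_eq_mul, Polynomial.map_mul, Polynomial.map_natCast, add_tsub_cancel_right,
        Nat.cast_add_one] at this
      rw [taylor_apply, C_1, add_comm X, this, add_sub_cancel_left]
    have hn : (n : K) + 1 ≠ 0 := Nat.cast_add_one_ne_zero n
    refine ⟨(a / (n + 1)) • B, ?_⟩
    rw [map_smul, ← smul_sub, hB, smul_eq_C_mul, ← C_mul_X_pow_eq_monomial, ← mul_assoc,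
      ← C_eq_natCast, ← C_1, ← C_add, ← C_mul, div_mul_cancel₀ _ hn]

theorem IsEventuallyPolynomial.of_succ_sub {K : Type*} [Field K] [CharZero K] {f : ℕ → K}
    (h : IsEventuallyPolynomial fun n => f (n + 1) - f n) : IsEventuallyPolynomial f := by
  obtain ⟨p, hp⟩ := h
  obtain ⟨q, rfl⟩ := exists_taylor_one_sub_eq p
  obtain ⟨n₀, hn₀⟩ := eventually_atTop.1 hp
  have hconst : ∀ n ≥ n₀, f n - q.eval (n : K) = f n₀ - q.eval (n₀ : K) := by
    refine Nat.le_induction rfl fun n hn ih => ?_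
    rw [← ih, ← sub_eq_zero]
    have := hn₀ n hn
    rw [eval_sub, taylor_eval] at this
    push_cast
    linear_combination this
  refine ⟨q + C (f n₀ - q.eval (n₀ : K)), eventually_atTop.2 ⟨n₀, fun n hn => ?_⟩⟩
  rw [eval_add, eval_C, ← hconst n hn, add_sub_cancel]

theorem coeff_taylor_one {R : Type*} [Semiring R] {q : R[X]} {k : ℕ} (h : q.natDegree ≤ k + 1) :
    (taylor 1 q).coeff k = q.coeff k + (k + 1) * q.coeff (k + 1) := by
  have hdeg : (hasseDeriv k q).natDegree ≤ 1 := (natDegree_hasseDeriv_le q k).trans (by omega)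
  rw [taylor_coeff, eq_X_add_C_of_natDegree_le_one hdeg, eval_add, eval_mul_X, eval_C, eval_C,
    hasseDeriv_coeff, hasseDeriv_coeff, zero_add, Nat.choose_self, add_comm 1 k,
    Nat.choose_succ_self_right, Nat.cast_one, Nat.cast_add_one, one_mul, mul_one,
    add_comm]

theorem coeff_taylor_one_sub {R : Type*} [Ring R] {q : R[X]} {k : ℕ} (h : q.natDegree ≤ k + 1) :
    (taylor 1 q - q).coeff k = (k + 1) * q.coeff (k + 1) := by
  rw [coeff_sub, coeff_taylor_one h, add_sub_cancel_left]

theorem natDegree_taylor_one_sub_le {R : Type*} [Ring R] {q : R[X]} {k : ℕ}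
    (h : q.natDegree ≤ k + 1) : (taylor 1 q - q).natDegree ≤ k := by
  refine natDegree_le_iff_coeff_eq_zero.2 fun m hm => ?_
  rw [coeff_sub, coeff_taylor_one (h.trans (by omega)),
    coeff_eq_zero_of_natDegree_lt (n := m + 1) (by omega), mul_zero, add_zero, sub_self]

theorem tendsto_eval_natCast_div_pow {q : ℝ[X]} {k : ℕ} (h : q.natDegree ≤ k) :
    Tendsto (fun n : ℕ => q.eval (n : ℝ) / (n : ℝ) ^ k) atTop (nhds (q.coeff k)) := by
  suffices H : Tendsto (fun x : ℝ => q.eval x / (X ^ k : ℝ[X]).eval x) atTop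
      (nhds (q.coeff k)) by
    simpa only [Function.comp_def, eval_pow, eval_X] using H.comp tendsto_natCast_atTop_atTop
  have hX : (X ^ k : ℝ[X]).degree = k := degree_X_pow k
  rcases (natDegree_le_iff_degree_le.1 h).eq_or_lt with heq | hlt
  · have hlead : q.coeff k = q.leadingCoeff / (X ^ k : ℝ[X]).leadingCoeff := by
      rw [leadingCoeff, natDegree_eq_of_degree_eq_some heq, leadingCoeff_X_pow, div_one]
    rw [hlead]
    exact div_tendsto_atTop_leadingCoeff_div_of_degree_eq q (X ^ k) (heq.trans hX.symm)
  · rw [coeff_eq_zero_of_degree_lt hlt]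
    exact div_tendsto_atTop_zero_of_degree_lt q (X ^ k) (hlt.trans_eq hX.symm)

theorem natDegree_le_of_eventually_abs_eval_div_le {q : ℝ[X]} {k : ℕ} {C : ℝ}
    (h : ∀ᶠ n : ℕ in atTop, |q.eval (n : ℝ) / (n : ℝ) ^ k| ≤ C) : q.natDegree ≤ k := by
  refine natDegree_le_iff_degree_le.2 (not_lt.1 fun hk => ?_)
  rw [← degree_X_pow (R := ℝ)] at hk
  have hlim := (abs_div_tendsto_atTop_atTop_of_degree_gt q (X ^ k) hk
    (pow_ne_zero _ X_ne_zero)).comp (tendsto_natCast_atTop_atTop (R := ℝ))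
  obtain ⟨n, hle, hlt⟩ := (h.and (hlim.eventually_gt_atTop C)).exists
  rw [Function.comp_apply, eval_pow, eval_X] at hlt
  exact hle.not_gt hlt

namespace IsEventuallyPolynomial

theorem exists_natDegree_le {f : ℕ → ℝ} (hf : IsEventuallyPolynomial f) {k : ℕ} {C : ℝ}
    (h : ∀ᶠ n : ℕ in atTop, |f n / (n : ℝ) ^ k| ≤ C) :
    ∃ q : ℝ[X], q.natDegree ≤ k ∧ ∀ᶠ n : ℕ in atTop, f n = q.eval (n : ℝ) := by
  obtain ⟨q, hq⟩ := hf
  refine ⟨q, natDegree_le_of_eventually_abs_eval_div_le (C := C) ?_, hq⟩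
  filter_upwards [h, hq] with n hn hqn
  rwa [← hqn]

theorem exists_tendsto_div_pow {f : ℕ → ℝ} (hf : IsEventuallyPolynomial f) {k : ℕ} {C : ℝ}
    (h : ∀ᶠ n : ℕ in atTop, |f n / (n : ℝ) ^ k| ≤ C) :
    ∃ ρ, Tendsto (fun n : ℕ => f n / (n : ℝ) ^ k) atTop (nhds ρ) := by
  obtain ⟨q, hdeg, hq⟩ := hf.exists_natDegree_le h
  exact ⟨q.coeff k, (tendsto_eval_natCast_div_pow hdeg).congr'
    (hq.mono fun n hn => by simp only [hn])⟩

theorem tendsto_succ_sub_div_pow {f : ℕ → ℝ} (hf : IsEventuallyPolynomial f) {k : ℕ} {V : ℝ}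
    (hV : Tendsto (fun n : ℕ => f n / (n : ℝ) ^ (k + 1)) atTop (nhds V)) :
    Tendsto (fun n : ℕ => (f (n + 1) - f n) / (n : ℝ) ^ k) atTop (nhds ((k + 1) * V)) := by
  obtain ⟨q, hdeg, hq⟩ := hf.exists_natDegree_le
    ((hV.abs.eventually_lt_const (lt_add_one _)).mono fun _ => le_of_lt)
  obtain rfl : q.coeff (k + 1) = V := tendsto_nhds_unique (tendsto_eval_natCast_div_pow hdeg)
    (hV.congr' (hq.mono fun n hn => by rw [hn]))
  rw [← coeff_taylor_one_sub hdeg]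
  refine (tendsto_eval_natCast_div_pow (natDegree_taylor_one_sub_le hdeg)).congr' ?_
  filter_upwards [hq, (tendsto_add_atTop_nat 1).eventually hq] with n hn hn'
  rw [eval_sub, taylor_eval, hn, hn', Nat.cast_add_one]

end IsEventuallyPolynomial

end EventuallyPolynomial

section HilbertFunction

variable {N : Type*} [AddCancelCommMonoid N] {T U : Set N} {w x y z : N}

/-- Divisibility by the submonoid generated by `T`: `y` is a translate of `x` by a sum of elements
of `T`. -/
def TranslateLE (T : Set N) (x y : N) : Prop :=
  ∃ t ∈ AddSubmonoid.closure T, x + t = y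

namespace TranslateLE

theorem refl (T : Set N) (x : N) : TranslateLE T x x :=
  ⟨0, zero_mem _, add_zero x⟩

theorem trans (hxy : TranslateLE T x y) (hyz : TranslateLE T y z) : TranslateLE T x z := by
  obtain ⟨⟨s, hs, rfl⟩, ⟨t, ht, rfl⟩⟩ := And.intro hxy hyz
  exact ⟨s + t, add_mem hs ht, (add_assoc x s t).symm⟩

theorem add_right (hw : w ∈ T) (x : N) : TranslateLE T x (x + w) :=
  ⟨w, AddSubmonoid.subset_closure hw, rfl⟩

theorem add_right_mono (h : TranslateLE T x y) (w : N) : TranslateLE T (x + w) (y + w) := by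
  obtain ⟨t, ht, rfl⟩ := h
  exact ⟨t, ht, add_right_comm x w t⟩

theorem mono {T' : Set N} (hT : T ⊆ T') (h : TranslateLE T x y) : TranslateLE T' x y := by
  obtain ⟨t, ht, rfl⟩ := h
  exact ⟨t, AddSubmonoid.closure_mono hT ht, rfl⟩

theorem of_insert (h : TranslateLE (insert w T) x z) :
    TranslateLE T x z ∨ ∃ u, TranslateLE (insert w T) x u ∧ u + w = z := by
  obtain ⟨s, hs, rfl⟩ := h
  rw [insert_eq, AddSubmonoid.closure_union, AddSubmonoid.mem_sup] at hs
  obtain ⟨_, hj, t, ht, rfl⟩ := hs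
  obtain ⟨j, rfl⟩ := AddSubmonoid.mem_closure_singleton.1 hj
  have ht' := AddSubmonoid.closure_mono (subset_insert w T) ht
  cases j with
  | zero => exact .inl ⟨t, ht, by rw [zero_nsmul, zero_add]⟩
  | succ j =>
    refine .inr ⟨x + (j • w + t), ⟨_, add_mem (nsmul_mem ?_ j) ht', rfl⟩, ?_⟩
    · exact AddSubmonoid.subset_closure (mem_insert w T)
    · rw [succ_nsmul, add_assoc x, add_right_comm (j • w)]

theorem eq_of_apply_eq {deg : N →+ ℕ} (hdeg : ∀ w ∈ T, deg w = 1) (h : TranslateLE T x y)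
    (hxy : deg x = deg y) : x = y := by
  obtain ⟨t, ht, rfl⟩ := h
  suffices t = 0 ∨ 0 < deg t by
    rw [map_add] at hxy
    rw [this.resolve_right (by omega), add_zero]
  clear hxy
  induction ht using AddSubmonoid.closure_induction with
  | mem w hw => exact .inr (by rw [hdeg w hw]; exact one_pos)
  | zero => exact .inl rfl
  | add s t _ _ hs ht =>
    rw [map_add]
    rcases hs with rfl | hs
    · rwa [zero_add, map_zero, zero_add]
    · exact .inr (by omega)

end TranslateLE

theorem partiallyWellOrderedOn_translateLE {F : Set N} (hT : T.Finite) (hF : F.Finite)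
    (hU : ∀ x ∈ U, ∃ f ∈ F, TranslateLE T f x) : U.PartiallyWellOrderedOn (TranslateLE T) := by
  lift T to Finset N using hT
  have hFT : (F ×ˢ (univ : Set (T → ℕ))).PartiallyWellOrderedOn
      fun p q => p.1 = q.1 ∧ p.2 ≤ q.2 :=
    hF.partiallyWellOrderedOn.prod (partiallyWellOrderedOn_univ_iff.2 wellQuasiOrdered_le)
  have himage := hFT.image_of_monotone_on (r' := TranslateLE T)
    (f := fun p => p.1 + ∑ i : T, p.2 i • (i : N)) ?_
  · refine himage.mono fun x hx => ?_
    obtain ⟨f, hf, t, ht, rfl⟩ := hU x hx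
    obtain ⟨a, rfl⟩ := AddSubmonoid.mem_closure_finset'.1 ht
    exact ⟨(f, a), ⟨hf, mem_univ a⟩, rfl⟩
  · rintro ⟨f, a⟩ - ⟨_, b⟩ - ⟨rfl, hab⟩
    obtain ⟨c, rfl⟩ := exists_add_of_le hab
    refine ⟨∑ i : T, c i • (i : N), AddSubmonoid.mem_closure_finset'.2 ⟨c, rfl⟩, ?_⟩
    simp only [Pi.add_apply, add_smul, Finset.sum_add_distrib, add_assoc]

/-- The combinatorial shadow of a Noetherian module over the polynomial ring with variables `T`:
the set `U` indexes a basis of homogeneous elements, and a variable sends the basis element `x` to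
`x + w` if this lies in `U` and to `0` otherwise. Convexity makes this action well defined, and
the well partial order makes the module Noetherian. -/
structure IsNoetherianOver (T U : Set N) : Prop where
  partiallyWellOrderedOn : U.PartiallyWellOrderedOn (TranslateLE T)
  mem_of_le_of_le : ∀ ⦃x y z⦄, x ∈ U → z ∈ U → TranslateLE T x y → TranslateLE T y z → y ∈ U

namespace IsNoetherianOver

theorem kernel (h : IsNoetherianOver (insert w T) U) :
    IsNoetherianOver T {x ∈ U | x + w ∉ U} where
  partiallyWellOrderedOn := by
    refine partiallyWellOrderedOn_iff_exists_lt.2 fun f hf => ?_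
    obtain ⟨m, n, hmn, hle⟩ := h.partiallyWellOrderedOn.exists_lt fun n => (hf n).1
    refine ⟨m, n, hmn, hle.of_insert.resolve_right ?_⟩
    rintro ⟨u, hu, huw⟩
    exact (hf m).2 <| h.mem_of_le_of_le (hf m).1 (hf n).1 (.add_right (mem_insert w T) _)
      (huw ▸ hu.add_right_mono w)
  mem_of_le_of_le x y z hx hz hxy hyz := by
    replace hxy := hxy.mono (subset_insert w T)
    exact ⟨h.mem_of_le_of_le hx.1 hz.1 hxy (hyz.mono (subset_insert w T)), fun hyw =>
      hx.2 <| h.mem_of_le_of_le hx.1 hyw (.add_right (mem_insert w T) x) (hxy.add_right_mono w)⟩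

theorem cokernel (h : IsNoetherianOver (insert w T) U) :
    IsNoetherianOver T {x ∈ U | ∀ u ∈ U, u + w ≠ x} where
  partiallyWellOrderedOn := by
    refine partiallyWellOrderedOn_iff_exists_lt.2 fun f hf => ?_
    obtain ⟨m, n, hmn, hle⟩ := h.partiallyWellOrderedOn.exists_lt fun n => (hf n).1
    refine ⟨m, n, hmn, hle.of_insert.resolve_right ?_⟩
    rintro ⟨u, hu, huw⟩
    refine (hf n).2 u (h.mem_of_le_of_le (hf m).1 (hf n).1 hu ?_) huw
    exact huw ▸ .add_right (mem_insert w T) u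
  mem_of_le_of_le x y z hx hz hxy hyz := by
    replace hxy := hxy.mono (subset_insert w T)
    replace hyz := hyz.mono (subset_insert w T)
    refine ⟨h.mem_of_le_of_le hx.1 hz.1 hxy hyz, ?_⟩
    rintro u hu rfl
    obtain ⟨t, ht, rfl⟩ := hyz
    rw [add_right_comm] at hz
    refine hz.2 (u + t) (h.mem_of_le_of_le hu hz.1 ⟨t, ht, rfl⟩ ?_) rfl
    exact .add_right (mem_insert w T) _

theorem finite_of_empty (h : IsNoetherianOver ∅ U) : U.Finite := by
  refine IsAntichain.finite_of_partiallyWellOrderedOn ?_ h.partiallyWellOrderedOn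
  rintro x - y - hxy ⟨t, ht, rfl⟩
  rw [AddSubmonoid.closure_empty, AddSubmonoid.mem_bot] at ht
  exact hxy (by rw [ht, add_zero])

theorem finite_degree_eq (h : IsNoetherianOver T U) {deg : N →+ ℕ} (hdeg : ∀ w ∈ T, deg w = 1)
    (n : ℕ) : {x ∈ U | deg x = n}.Finite := by
  refine IsAntichain.finite_of_partiallyWellOrderedOn ?_
    (h.partiallyWellOrderedOn.mono (sep_subset U _))
  exact fun x hx y hy hxy hle => hxy (hle.eq_of_apply_eq hdeg (hx.2.trans hy.2.symm))

theorem ncard_degree_succ_add (h : IsNoetherianOver (insert w T) U) {deg : N →+ ℕ}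
    (hdeg : ∀ v ∈ insert w T, deg v = 1) (n : ℕ) :
    {x ∈ U | deg x = n + 1}.ncard + {x ∈ {x ∈ U | x + w ∉ U} | deg x = n}.ncard =
      {x ∈ {x ∈ U | ∀ u ∈ U, u + w ≠ x} | deg x = n + 1}.ncard + {x ∈ U | deg x = n}.ncard := by
  have hw : deg w = 1 := hdeg w (mem_insert w T)
  have himage : {x ∈ U | deg x = n + 1} \ {x ∈ {x ∈ U | ∀ u ∈ U, u + w ≠ x} | deg x = n + 1} =
      (· + w) '' ({x ∈ U | deg x = n} \ {x ∈ {x ∈ U | x + w ∉ U} | deg x = n}) := by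
    ext x
    constructor
    · rintro ⟨⟨hx, hxn⟩, hxC⟩
      obtain ⟨u, hu, rfl⟩ : ∃ u ∈ U, u + w = x := by
        by_contra! hC
        exact hxC ⟨⟨hx, hC⟩, hxn⟩
      rw [map_add, hw, Nat.add_right_cancel_iff] at hxn
      exact ⟨u, ⟨⟨hu, hxn⟩, fun hK => hK.1.2 hx⟩, rfl⟩
    · rintro ⟨u, ⟨⟨hu, rfl⟩, huK⟩, rfl⟩
      have huw : u + w ∈ U := by
        by_contra hK
        exact huK ⟨⟨hu, hK⟩, rfl⟩
      exact ⟨⟨huw, by rw [map_add, hw]⟩, fun hC => hC.1.2 u hu rfl⟩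
  have hncard := congrArg ncard himage
  rw [ncard_image_of_injective _ (add_left_injective w)] at hncard
  have hsource := ncard_sdiff_add_ncard_of_subset (s := {x ∈ {x ∈ U | x + w ∉ U} | deg x = n})
    (t := {x ∈ U | deg x = n}) (fun x hx => ⟨hx.1.1, hx.2⟩) (h.finite_degree_eq hdeg n)
  have htarget := ncard_sdiff_add_ncard_of_subset
    (s := {x ∈ {x ∈ U | ∀ u ∈ U, u + w ≠ x} | deg x = n + 1}) (t := {x ∈ U | deg x = n + 1})
    (fun x hx => ⟨hx.1.1, hx.2⟩) (h.finite_degree_eq hdeg (n + 1))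
  omega

theorem isEventuallyPolynomial_ncard (K : Type*) [Field K] [CharZero K] {deg : N →+ ℕ}
    (hT : T.Finite) (hdeg : ∀ w ∈ T, deg w = 1) (h : IsNoetherianOver T U) :
    IsEventuallyPolynomial fun n => ({x ∈ U | deg x = n}.ncard : K) := by
  induction T, hT using Set.Finite.induction_on generalizing U with
  | empty =>
    obtain ⟨B, hB⟩ := (h.finite_of_empty.image deg).bddAbove
    refine .of_eventually_eq_const (a := 0) ((eventually_gt_atTop B).mono fun n hn => ?_)
    have hempty : {x ∈ U | deg x = n} = ∅ :=
      eq_empty_of_forall_notMem fun x hx => (hB (mem_image_of_mem deg hx.1)).not_gt (hx.2 ▸ hn)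
    rw [hempty, ncard_empty, Nat.cast_zero]
  | @insert w T _ _ ih =>
    have hdegT : ∀ v ∈ T, deg v = 1 := fun v hv => hdeg v (mem_insert_of_mem w hv)
    refine .of_succ_sub ?_
    refine (congrArg IsEventuallyPolynomial (funext fun n => ?_)).mpr
      ((ih hdegT h.cokernel).comp_succ.sub (ih hdegT h.kernel))
    rw [Pi.sub_apply, sub_eq_sub_iff_add_eq_add]
    exact_mod_cast h.ncard_degree_succ_add hdeg n

end IsNoetherianOver

end HilbertFunction

section ReesCoefficients

variable {M : Type*} [AddCancelCommMonoid M] {T : Set M} {ψ : M → ℝ}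

/-- The classes modulo `1`, represented in `(0, 1]`, of the positive values of `ψ`: for a monomial
ideal, the jumping numbers modulo `1`. -/
def fractionalJumps {M : Type*} (ψ : M → ℝ) : Set ℝ :=
  {c ∈ Ioc 0 1 | ∃ (n : ℕ) (v : M), ψ v = c + n}

/-- An order function on the monomials `M` that increases by at least one under translation by
`T`, with finite sublevel sets, and satisfying Skoda's theorem: far out, every monomial is a
translate by `T` of one whose order is exactly one less. For monomial ideals, `ψ v` is the largest
`c` with `v + 1 ∈ c • P`. -/
structure IsSkodaOrder (T : Set M) (ψ : M → ℝ) : Prop where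
  add_one_le : ∀ w ∈ T, ∀ v, ψ v + 1 ≤ ψ (v + w)
  exists_bound : ∃ B, ∀ v, B < ψ v → ∃ w ∈ T, ∃ u, u + w = v ∧ ψ u + 1 = ψ v
  finite_le : ∀ B, {v | ψ v ≤ B}.Finite

namespace IsSkodaOrder

theorem finite_eq (h : IsSkodaOrder T ψ) (c : ℝ) : {v | ψ v = c}.Finite :=
  (h.finite_le c).subset fun _ hv => le_of_eq hv

theorem add_snd_le (h : IsSkodaOrder T ψ) {t : M × ℕ}
    (ht : t ∈ AddSubmonoid.closure (T ×ˢ ({1} : Set ℕ))) (v : M) : ψ v + t.2 ≤ ψ (v + t.1) := by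
  induction ht using AddSubmonoid.closure_induction generalizing v with
  | mem t ht =>
    obtain ⟨htT, htn⟩ := ht
    rw [mem_singleton_iff.1 htn, Nat.cast_one]
    exact h.add_one_le t.1 htT v
  | zero => simp
  | add s t _ _ hs ht =>
    calc ψ v + ((s + t).2 : ℕ) = ψ v + s.2 + t.2 := by rw [Prod.snd_add]; push_cast; ring
      _ ≤ ψ (v + s.1) + t.2 := by gcongr; exact hs v
      _ ≤ ψ (v + s.1 + t.1) := ht _
      _ = ψ (v + (s + t).1) := by rw [Prod.fst_add, add_assoc]

theorem exists_bound_translateLE (h : IsSkodaOrder T ψ) :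
    ∃ B : ℝ, ∀ (c : ℝ) (n : ℕ) (v : M), ψ v = c + n →
      ∃ p : M × ℕ, ψ p.1 = c + p.2 ∧ ψ p.1 ≤ max B c ∧ TranslateLE (T ×ˢ {1}) p (v, n) := by
  obtain ⟨B, hB⟩ := h.exists_bound
  refine ⟨B, fun c n => ?_⟩
  induction n with
  | zero => exact fun v hv => ⟨(v, 0), hv, by simp [hv], .refl _ _⟩
  | succ n ih =>
    intro v hv
    by_cases hvB : ψ v ≤ max B c
    · exact ⟨(v, n + 1), hv, hvB, .refl _ _⟩
    · obtain ⟨w, hw, u, rfl, hu⟩ := hB v ((le_max_left B c).trans_lt (not_le.1 hvB))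
      obtain ⟨p, hp, hpB, hpu⟩ := ih u (by push_cast at hv; linarith)
      have huv : TranslateLE (T ×ˢ {1}) (u, n) (u + w, n + 1) :=
        .add_right (mk_mem_prod hw (mem_singleton 1)) (u, n)
      exact ⟨p, hp, hpB, hpu.trans huv⟩

theorem isNoetherianOver (h : IsSkodaOrder T ψ) (hT : T.Finite) (c : ℝ) :
    IsNoetherianOver (T ×ˢ {1}) {p : M × ℕ | ψ p.1 = c + p.2} where
  partiallyWellOrderedOn := by
    obtain ⟨B, hB⟩ := h.exists_bound_translateLE
    refine partiallyWellOrderedOn_translateLE (hT.prod (finite_singleton 1))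
      (F := {p | ψ p.1 = c + p.2 ∧ ψ p.1 ≤ max B c}) (.of_finite_image (f := Prod.fst) ?_ ?_) ?_
    · refine (h.finite_le (max B c)).subset ?_
      rintro _ ⟨p, hp, rfl⟩
      exact hp.2
    · rintro ⟨v, m⟩ hm ⟨_, n⟩ hn rfl
      exact Prod.ext rfl (Nat.cast_injective (add_left_cancel (hm.1.symm.trans hn.1)))
    · rintro ⟨v, n⟩ hv
      obtain ⟨p, hp, hpB, hle⟩ := hB c n v hv
      exact ⟨p, ⟨hp, hpB⟩, hle⟩
  mem_of_le_of_le := by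
    rintro ⟨u, l⟩ _ _ hu hz ⟨s, hs, rfl⟩ ⟨t, ht, rfl⟩
    have hus := h.add_snd_le hs u
    have hust := h.add_snd_le ht (u + s.1)
    simp only [mem_ofPred_eq, Prod.fst_add, Prod.snd_add, Nat.cast_add] at hu hz ⊢
    linarith

theorem isEventuallyPolynomial_ncard_eq (h : IsSkodaOrder T ψ) (hT : T.Finite) (c : ℝ) :
    IsEventuallyPolynomial fun n : ℕ => ({v | ψ v = c + n}.ncard : ℝ) := by
  have hlevel (n : ℕ) : {p ∈ {p : M × ℕ | ψ p.1 = c + p.2} | AddMonoidHom.snd M ℕ p = n} =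
      (fun v => (v, n)) '' {v | ψ v = c + n} := by
    ext ⟨v, m⟩
    constructor
    · rintro ⟨hv, rfl⟩
      exact ⟨v, hv, rfl⟩
    · rintro ⟨v, hv, ⟨⟩⟩
      exact ⟨hv, rfl⟩
  have hpoly := (h.isNoetherianOver hT c).isEventuallyPolynomial_ncard ℝ
    (deg := AddMonoidHom.snd M ℕ) (hT.prod (finite_singleton 1)) fun w hw => hw.2
  simpa only [hlevel, ncard_image_of_injective _ (Prod.mk_left_injective _)] using hpoly

theorem finite_fractionalJumps (h : IsSkodaOrder T ψ) : (fractionalJumps ψ).Finite := by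
  obtain ⟨B, hB⟩ := h.exists_bound_translateLE
  refine ((h.finite_le (max B 1)).image fun v => ψ v - ⌈ψ v⌉ + 1).subset ?_
  rintro c ⟨hc, n, v, hv⟩
  obtain ⟨⟨u, m⟩, hu, huB, -⟩ := hB c n v hv
  refine ⟨u, huB.trans (max_le_max_left B hc.2), ?_⟩
  have hceil : ⌈ψ u⌉ = (m : ℤ) + 1 := by
    rw [hu, Int.ceil_add_natCast, add_comm, (Int.ceil_eq_iff (z := 1)).2 (by simpa using hc)]
  dsimp only at hu ⊢
  rw [hceil, hu]
  push_cast
  ring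

theorem ncard_le_succ (h : IsSkodaOrder T ψ) (n : ℕ) :
    {v | ψ v ≤ (n + 1 : ℕ)}.ncard =
      {v | ψ v ≤ n}.ncard + ∑ᶠ c ∈ fractionalJumps ψ, {v | ψ v = c + n}.ncard := by
  have hunion : {v | ψ v ≤ (n + 1 : ℕ)} =
      {v | ψ v ≤ n} ∪ ⋃ c ∈ fractionalJumps ψ, {v | ψ v = c + n} := by
    ext v
    simp only [mem_ofPred_eq, mem_union, mem_iUnion, exists_prop, Nat.cast_add_one]
    constructor
    · refine fun hv => or_iff_not_imp_left.2 fun hvn => ⟨ψ v - n, ⟨?_, n, v, ?_⟩, ?_⟩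
      · exact ⟨by linarith, by linarith⟩
      all_goals ring
    · rintro (hv | ⟨c, ⟨hc, -⟩, hv⟩)
      · linarith
      · linarith [hc.2]
  have hdisj : Disjoint {v | ψ v ≤ n} (⋃ c ∈ fractionalJumps ψ, {v | ψ v = c + n}) := by
    simp only [disjoint_iUnion_right]
    refine fun c hc => disjoint_left.2 fun v hvn (hv : ψ v = c + n) => ?_
    linarith [hc.1.1, mem_ofPred.1 hvn]
  have hpairwise : (fractionalJumps ψ).PairwiseDisjoint fun c => {v | ψ v = c + n} :=
    fun c _ c' _ hcc => disjoint_left.2 fun v hv hv' => hcc (add_right_cancel (hv.symm.trans hv'))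
  rw [hunion, ncard_union_eq hdisj (h.finite_le n)
    (h.finite_fractionalJumps.biUnion fun c _ => h.finite_eq (c + n)),
    h.finite_fractionalJumps.ncard_biUnion (fun c _ => h.finite_eq (c + n)) hpairwise]

theorem sum_ncard_eq (h : IsSkodaOrder T ψ) (n : ℕ) :
    ∑ c ∈ h.finite_fractionalJumps.toFinset, ({v | ψ v = c + n}.ncard : ℝ) =
      {v | ψ v ≤ (n + 1 : ℕ)}.ncard - {v | ψ v ≤ n}.ncard := by
  rw [h.ncard_le_succ, finsum_mem_eq_finite_toFinset_sum _ h.finite_fractionalJumps]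
  push_cast
  ring

variable {k : ℕ} {V : ℝ}

theorem tendsto_sum_ncard_eq_div_pow (h : IsSkodaOrder T ψ) (hT : T.Finite)
    (hV : Tendsto (fun n : ℕ => ({v | ψ v ≤ n}.ncard : ℝ) / (n : ℝ) ^ (k + 1)) atTop (nhds V)) :
    Tendsto (fun n : ℕ => ∑ c ∈ h.finite_fractionalJumps.toFinset,
      ({v | ψ v = c + n}.ncard : ℝ) / (n : ℝ) ^ k) atTop (nhds ((k + 1) * V)) := by
  have hpoly : IsEventuallyPolynomial fun n : ℕ => ({v | ψ v ≤ n}.ncard : ℝ) := by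
    refine .of_succ_sub ((congrArg IsEventuallyPolynomial (funext fun n => ?_)).mpr
      (.sum fun c (_ : c ∈ h.finite_fractionalJumps.toFinset) =>
        h.isEventuallyPolynomial_ncard_eq hT c))
    rw [Finset.sum_apply, h.sum_ncard_eq]
  simpa only [← Finset.sum_div, h.sum_ncard_eq] using hpoly.tendsto_succ_sub_div_pow hV

theorem exists_tendsto_ncard_eq_div_pow (h : IsSkodaOrder T ψ) (hT : T.Finite)
    (hV : Tendsto (fun n : ℕ => ({v | ψ v ≤ n}.ncard : ℝ) / (n : ℝ) ^ (k + 1)) atTop (nhds V))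
    {c : ℝ} (hc : c ∈ fractionalJumps ψ) :
    ∃ ρ, Tendsto (fun n : ℕ => ({v | ψ v = c + n}.ncard : ℝ) / (n : ℝ) ^ k) atTop (nhds ρ) := by
  refine (h.isEventuallyPolynomial_ncard_eq hT c).exists_tendsto_div_pow (C := (k + 1) * V + 1) ?_
  filter_upwards [(h.tendsto_sum_ncard_eq_div_pow hT hV).eventually_lt_const (lt_add_one _)]
    with n hn
  rw [abs_of_nonneg (by positivity)]
  refine (Finset.single_le_sum (f := fun c => ({v | ψ v = c + n}.ncard : ℝ) / (n : ℝ) ^ k)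
    (fun c _ => by positivity) ?_).trans hn.le
  exact h.finite_fractionalJumps.mem_toFinset.2 hc

theorem exists_reesCoefficients (h : IsSkodaOrder T ψ) (hT : T.Finite)
    (hV : Tendsto (fun n : ℕ => ({v | ψ v ≤ n}.ncard : ℝ) / (n : ℝ) ^ (k + 1)) atTop (nhds V)) :
    ∃ ρ : ℝ → ℝ,
      (∀ c ∈ Ioc (0 : ℝ) 1, Tendsto (fun n : ℕ => ({v | ψ v = c + n}.ncard : ℝ) / (n : ℝ) ^ k)
        atTop (nhds (ρ c))) ∧
      {c ∈ Ioc (0 : ℝ) 1 | ρ c ≠ 0}.Finite ∧ ∑ᶠ c ∈ Ioc (0 : ℝ) 1, ρ c = (k + 1) * V := by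
  choose! ρ hρ using fun c => h.exists_tendsto_ncard_eq_div_pow hT hV (c := c)
  refine ⟨(fractionalJumps ψ).indicator ρ, fun c hc => ?_, ?_, ?_⟩
  · by_cases hcJ : c ∈ fractionalJumps ψ
    · simpa only [indicator_of_mem hcJ] using hρ c hcJ
    · have hempty (n : ℕ) : {v | ψ v = c + n} = ∅ :=
        eq_empty_of_forall_notMem fun v hv => hcJ ⟨hc, n, v, hv⟩
      simp [indicator_of_notMem hcJ, hempty]
  · exact h.finite_fractionalJumps.subset fun c hc => mem_of_indicator_ne_zero hc.2
  · rw [finsum_mem_eq_sum_of_subset (t := h.finite_fractionalJumps.toFinset) _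
      (fun c hc => h.finite_fractionalJumps.mem_toFinset.2 (mem_of_indicator_ne_zero hc.2))
      (h.finite_fractionalJumps.coe_toFinset.trans_subset (sep_subset _ _))]
    refine tendsto_nhds_unique (tendsto_finsetSum _ fun c hc => ?_)
      (h.tendsto_sum_ncard_eq_div_pow hT hV)
    rw [Finite.mem_toFinset] at hc
    simpa only [indicator_of_mem hc] using hρ c hc

end IsSkodaOrder

end ReesCoefficients

section DilationLevel

variable {ι : Type*} {P : Set (ι → ℝ)} {x y : ι → ℝ} {c : ℝ}

/-- The largest `c > 0` such that `x ∈ c • P`, for `P` and `x` for which it exists. -/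
noncomputable def dilationLevel (P : Set (ι → ℝ)) (x : ι → ℝ) : ℝ :=
  sSup {c | 0 < c ∧ x ∈ c • P}

/-- The properties of Newton polyhedra of nonzero proper monomial ideals on which the theory of
their dilates rests. -/
structure IsNewtonRegion (P : Set (ι → ℝ)) : Prop where
  nonempty : P.Nonempty
  isClosed : IsClosed P
  convex : Convex ℝ P
  isUpperSet : IsUpperSet P
  zero_notMem : 0 ∉ P

theorem isUpperSet_smul (hP : IsUpperSet P) (hc : 0 < c) : IsUpperSet (c • P) := by
  intro x y hxy hx
  rw [mem_smul_set_iff_inv_smul_mem₀ hc.ne'] at hx ⊢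
  exact hP (smul_le_smul_of_nonneg_left hxy (inv_nonneg.2 hc.le)) hx

theorem mem_smul_of_le {c' : ℝ} (hP : IsUpperSet P) (hx : 0 ≤ x) (hc : 0 < c) (hcc' : c ≤ c')
    (hxc' : x ∈ c' • P) : x ∈ c • P := by
  rw [mem_smul_set_iff_inv_smul_mem₀ hc.ne']
  rw [mem_smul_set_iff_inv_smul_mem₀ (hc.trans_le hcc').ne'] at hxc'
  exact hP (smul_le_smul_of_nonneg_right (inv_anti₀ hc hcc') hx) hxc'

namespace IsNewtonRegion

theorem bddAbove_dilations (hP : IsNewtonRegion P) (x : ι → ℝ) :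
    BddAbove {c : ℝ | 0 < c ∧ x ∈ c • P} := by
  have hlim : Tendsto (fun c : ℝ => c⁻¹ • x) atTop (nhds 0) := by
    simpa using (tendsto_inv_atTop_zero (𝕜 := ℝ)).smul_const x
  obtain ⟨b, hb⟩ := eventually_atTop.1
    (hlim.eventually (hP.isClosed.isOpen_compl.mem_nhds hP.zero_notMem))
  refine ⟨b, fun c ⟨hc, hxc⟩ => le_of_not_ge fun hbc => hb c hbc ?_⟩
  exact (mem_smul_set_iff_inv_smul_mem₀ hc.ne' P x).1 hxc

theorem nonempty_dilations [Finite ι] (hP : IsNewtonRegion P) (hx : ∀ i, 0 < x i) :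
    {c : ℝ | 0 < c ∧ x ∈ c • P}.Nonempty := by
  obtain ⟨p, hp⟩ := hP.nonempty
  have hle : ∀ᶠ t : ℝ in atTop, ∀ i, p i ≤ t * x i :=
    eventually_all.2 fun i => (tendsto_id.atTop_mul_const (hx i)).eventually_ge_atTop (p i)
  obtain ⟨t, ht, ht0⟩ := (hle.and (eventually_gt_atTop 0)).exists
  refine ⟨t⁻¹, inv_pos.2 ht0, ?_⟩
  rw [mem_smul_set_iff_inv_smul_mem₀ (inv_ne_zero ht0.ne'), inv_inv]
  exact hP.isUpperSet ht hp

theorem le_dilationLevel (hP : IsNewtonRegion P) (hc : 0 < c) (hx : x ∈ c • P) :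
    c ≤ dilationLevel P x :=
  le_csSup (hP.bddAbove_dilations x) ⟨hc, hx⟩

theorem dilationLevel_pos [Finite ι] (hP : IsNewtonRegion P) (hx : ∀ i, 0 < x i) :
    0 < dilationLevel P x := by
  obtain ⟨c, hc, hxc⟩ := hP.nonempty_dilations hx
  exact hc.trans_le (hP.le_dilationLevel hc hxc)

theorem mem_dilationLevel_smul [Finite ι] (hP : IsNewtonRegion P) (hx : ∀ i, 0 < x i) :
    x ∈ dilationLevel P x • P := by
  have hpos := (hP.dilationLevel_pos hx).ne'
  obtain ⟨u, -, hu, hmem⟩ :=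
    exists_seq_tendsto_sSup (hP.nonempty_dilations hx) (hP.bddAbove_dilations x)
  rw [mem_smul_set_iff_inv_smul_mem₀ hpos]
  refine hP.isClosed.mem_of_tendsto ((hu.inv₀ hpos).smul_const x) (.of_forall fun n => ?_)
  exact (mem_smul_set_iff_inv_smul_mem₀ (hmem n).1.ne' P x).1 (hmem n).2

theorem mem_smul_iff [Finite ι] (hP : IsNewtonRegion P) (hx : ∀ i, 0 < x i) (hc : 0 < c) :
    x ∈ c • P ↔ c ≤ dilationLevel P x :=
  ⟨hP.le_dilationLevel hc, fun h =>
    mem_smul_of_le hP.isUpperSet (fun i => (hx i).le) hc h (hP.mem_dilationLevel_smul hx)⟩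

theorem mem_interior_smul_iff [Finite ι] (hP : IsNewtonRegion P) (hx : ∀ i, 0 < x i) (hc : 0 < c) :
    x ∈ interior (c • P) ↔ c < dilationLevel P x := by
  constructor
  · intro hint
    have hlim : Tendsto (fun s : ℝ => s • x) (nhdsWithin 1 (Iio 1)) (nhds x) := by
      have hcont : Continuous fun s : ℝ => s • x := by fun_prop
      simpa using (hcont.tendsto 1).mono_left nhdsWithin_le_nhds
    obtain ⟨s, hs, hs0, hs1⟩ := ((hlim.eventually (isOpen_interior.mem_nhds hint)).and
      (Ioo_mem_nhdsLT one_pos)).exists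
    replace hs : s • x ∈ c • P := interior_subset hs
    refine ((lt_div_iff₀ hs0).2 (mul_lt_of_lt_one_right hc hs1)).trans_le
      (hP.le_dilationLevel (div_pos hc hs0) ?_)
    rw [mem_smul_set_iff_inv_smul_mem₀ hc.ne', smul_smul] at hs
    rwa [mem_smul_set_iff_inv_smul_mem₀ (div_pos hc hs0).ne', inv_div, div_eq_inv_mul]
  · intro hlt
    have hpos := hc.trans hlt
    have hmem : (c / dilationLevel P x) • x ∈ c • P := by
      have := smul_mem_smul_set (a := c / dilationLevel P x) (hP.mem_dilationLevel_smul hx)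
      rwa [smul_smul, div_mul_cancel₀ _ hpos.ne'] at this
    exact (isUpperSet_smul hP.isUpperSet hc).mem_interior_of_forall_lt (subset_closure hmem)
      fun i => mul_lt_of_lt_one_left (hx i) ((div_lt_one hpos).2 hlt)

theorem mem_smul_sdiff_interior_iff [Finite ι] (hP : IsNewtonRegion P) (hx : ∀ i, 0 < x i)
    (hc : 0 < c) :
    x ∈ c • P \ interior (c • P) ↔ dilationLevel P x = c := by
  rw [Set.mem_sdiff, hP.mem_smul_iff hx hc, hP.mem_interior_smul_iff hx hc, not_lt, and_comm,
    ← le_antisymm_iff]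

theorem dilationLevel_add_one_le [Finite ι] (hP : IsNewtonRegion P) (hx : ∀ i, 0 < x i)
    (hy : y ∈ P) :
    dilationLevel P x + 1 ≤ dilationLevel P (x + y) := by
  have hpos := hP.dilationLevel_pos hx
  refine hP.le_dilationLevel (by positivity) ?_
  rw [hP.convex.add_smul hpos.le zero_le_one, one_smul]
  exact add_mem_add (hP.mem_dilationLevel_smul hx) hy

end IsNewtonRegion

end DilationLevel

section SubtractGenerator

theorem exists_sub_mem_smul_convexHull {E : Type*} [AddCommGroup E] [Module ℝ E] {G : Finset E}
    {c : ℝ} {x : E} (hc : G.card < c) (hx : x ∈ c • convexHull ℝ (G : Set E)) :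
    ∃ g ∈ G, x - g ∈ (c - 1) • convexHull ℝ (G : Set E) := by
  classical
  obtain ⟨y, hy, rfl⟩ := hx
  obtain ⟨w, hw0, hw1, rfl⟩ := Finset.mem_convexHull'.1 hy
  obtain ⟨g, hg, hwg⟩ : ∃ g ∈ G, 1 ≤ c * w g := by
    by_contra! hlt
    have := Finset.sum_le_card_nsmul G (fun g => c * w g) 1 fun g hg => (hlt g hg).le
    rw [← Finset.mul_sum, hw1, mul_one, nsmul_one] at this
    exact this.not_gt hc
  have hc1 : 0 < c - 1 := by
    have : (1 : ℝ) ≤ G.card := by exact_mod_cast Finset.card_pos.2 ⟨g, hg⟩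
    linarith
  refine ⟨g, hg, (mem_smul_set_iff_inv_smul_mem₀ hc1.ne' _ _).2 (Finset.mem_convexHull'.2
    ⟨fun h => (c - 1)⁻¹ * (c * w h - if h = g then 1 else 0), fun h hh => ?_, ?_, ?_⟩)⟩
  · refine mul_nonneg (inv_nonneg.2 hc1.le) (sub_nonneg.2 ?_)
    split_ifs with hgh
    · rwa [hgh]
    · exact mul_nonneg (by linarith) (hw0 h hh)
  · simp [← Finset.mul_sum, Finset.sum_sub_distrib, hw1, hg, hc1.ne']
  · simp only [mul_smul, sub_smul, ite_smul, one_smul, zero_smul, ← Finset.smul_sum,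
      Finset.sum_sub_distrib, Finset.sum_ite_eq', hg, if_true]

variable {ι : Type*} {P : Set (ι → ℝ)} {G : Finset (ι → ℝ)} {x : ι → ℝ} {c : ℝ}

theorem exists_lt_sub_mem_smul
    (hPG : P = upperClosure (convexHull ℝ (G : Set (ι → ℝ)))) (hG : ∀ g ∈ G, 0 ≤ g)
    (hx : ∀ i, 0 < x i) (hc : G.card < c) (hxc : x ∈ c • P) :
    ∃ g ∈ G, (∀ i, g i < x i) ∧ x - g ∈ (c - 1) • P := by
  subst hPG
  obtain ⟨p, ⟨q, hq, hqp⟩, rfl⟩ := hxc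
  -- Subtracting `g` from `b • q` for some `b < c` leaves room for the strict inequalities.
  obtain ⟨b, hb, hbc⟩ := exists_between hc
  obtain ⟨g, hg, hqg⟩ := exists_sub_mem_smul_convexHull hb (smul_mem_smul_set hq)
  have hb1 : 0 ≤ b - 1 := by
    have : (1 : ℝ) ≤ G.card := by exact_mod_cast Finset.card_pos.2 ⟨g, hg⟩
    linarith
  have hcqg : c • q - g ∈ (c - 1) • convexHull ℝ (G : Set (ι → ℝ)) := by
    rw [show c • q - g = (b • q - g) + (c - b) • q by module,
      show c - 1 = (b - 1) + (c - b) by ring,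
      (convex_convexHull ℝ _).add_smul hb1 (sub_nonneg.2 hbc.le)]
    exact add_mem_add hqg (smul_mem_smul_set hq)
  have hgq : g ≤ b • q := by
    obtain ⟨r, hr, hrg⟩ := hqg
    have hr0 : 0 ≤ r := convexHull_min hG (convex_Ici 0) hr
    exact sub_nonneg.1 (hrg ▸ smul_nonneg hb1 hr0)
  refine ⟨g, hg, fun i => ?_, ?_⟩
  · have hp : 0 < p i := pos_of_mul_pos_right (hx i) (by linarith)
    calc g i ≤ b * q i := hgq i
      _ ≤ b * p i := mul_le_mul_of_nonneg_left (hqp i) (by linarith)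
      _ < c * p i := mul_lt_mul_of_pos_right hbc hp
  · exact isUpperSet_smul (upperClosure _).upper (by linarith)
      (sub_le_sub_right (smul_le_smul_of_nonneg_left hqp (by linarith)) g)
      (smul_set_mono subset_upperClosure hcqg)

theorem exists_dilationLevel_sub_add_one_eq [Finite ι] (hP : IsNewtonRegion P)
    (hPG : P = upperClosure (convexHull ℝ (G : Set (ι → ℝ)))) (hG : ∀ g ∈ G, 0 ≤ g)
    (hx : ∀ i, 0 < x i) (hc : G.card < dilationLevel P x) :
    ∃ g ∈ G, (∀ i, g i < x i) ∧ dilationLevel P (x - g) + 1 = dilationLevel P x := by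
  obtain ⟨g, hg, hgx, hmem⟩ :=
    exists_lt_sub_mem_smul hPG hG hx hc (hP.mem_dilationLevel_smul hx)
  have hcard : (1 : ℝ) ≤ G.card := by exact_mod_cast Finset.card_pos.2 ⟨g, hg⟩
  have hgP : g ∈ P := hPG ▸ subset_upperClosure (subset_convexHull ℝ _ (Finset.mem_coe.2 hg))
  have hle := hP.dilationLevel_add_one_le (x := x - g) (fun i => sub_pos.2 (hgx i)) hgP
  rw [sub_add_cancel] at hle
  exact ⟨g, hg, hgx, hle.antisymm (by linarith [hP.le_dilationLevel (by linarith) hmem])⟩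

end SubtractGenerator

section NewtonPolyhedron

variable {d : ℕ} {S : Set (Fin d → ℕ)}

theorem expToReal_add (v w : Fin d → ℕ) : expToReal d (v + w) = expToReal d v + expToReal d w :=
  funext fun _ => Nat.cast_add _ _

theorem expToReal_le_expToReal {v w : Fin d → ℕ} : expToReal d v ≤ expToReal d w ↔ v ≤ w := by
  simp only [Pi.le_def, expToReal, Nat.cast_le]

theorem expToReal_nonneg (v : Fin d → ℕ) : 0 ≤ expToReal d v := fun i => Nat.cast_nonneg (v i)

theorem expToReal_add_one_pos (v : Fin d → ℕ) (i : Fin d) : 0 < (expToReal d v + 1) i :=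
  Nat.cast_add_one_pos (v i)

theorem expToReal_mem_newtonPoly {v : Fin d → ℕ} (hv : v ∈ S) : expToReal d v ∈ newtonPoly d S :=
  subset_convexHull ℝ _ ⟨v, hv, rfl⟩

theorem expToReal_add_mem_newtonPoly (hS : IsUpperSet S) {s : Fin d → ℕ} (hs : s ∈ S)
    {y : Fin d → ℝ} (hy : 0 ≤ y) : expToReal d s + y ∈ newtonPoly d S := by
  have hvertices : (Set.univ.pi fun i => {(s i : ℝ), (s i : ℝ) + ⌈y i⌉₊}) ⊆ expToReal d '' S := by
    intro z hz
    have hz' : ∀ i, ∃ n : ℕ, s i ≤ n ∧ (n : ℝ) = z i := fun i => by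
      rcases hz i trivial with h | h
      · exact ⟨s i, le_rfl, h.symm⟩
      · exact ⟨s i + ⌈y i⌉₊, Nat.le_add_right _ _, by rw [Nat.cast_add, h]⟩
    choose n hsn hnz using hz'
    exact ⟨n, hS hsn hs, funext hnz⟩
  refine convexHull_mono hvertices (mem_convexHull_pi fun i _ => ?_)
  rw [convexHull_pair, segment_eq_Icc (le_add_of_nonneg_right (Nat.cast_nonneg _))]
  exact ⟨le_add_of_nonneg_right (hy i), add_le_add_right (Nat.le_ceil (y i)) _⟩

theorem isUpperSet_newtonPoly (hS : IsUpperSet S) : IsUpperSet (newtonPoly d S) := by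
  intro x x' hxx' hx
  have hconv : Convex ℝ {z | z + (x' - x) ∈ newtonPoly d S} :=
    (convex_convexHull ℝ _).translate_preimage_left _
  have hsub : expToReal d '' S ⊆ {z | z + (x' - x) ∈ newtonPoly d S} := by
    rintro _ ⟨s, hs, rfl⟩
    exact expToReal_add_mem_newtonPoly hS hs (sub_nonneg.2 hxx')
  simpa using convexHull_min hsub hconv hx

theorem zero_mem_newtonPoly_iff : 0 ∈ newtonPoly d S ↔ 0 ∈ S := by
  refine ⟨fun h => ?_, fun h => ?_⟩
  · by_contra h0
    have hsub : expToReal d '' S ⊆ {x | 0 < ∑ i, x i} := by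
      rintro _ ⟨s, hs, rfl⟩
      have hs0 : 0 < s := pos_iff_ne_zero.2 fun hs0 => h0 (hs0 ▸ hs)
      obtain ⟨i, hi⟩ := (Pi.lt_def.1 hs0).2
      exact Finset.sum_pos' (fun i _ => expToReal_nonneg s i)
        ⟨i, Finset.mem_univ i, Nat.cast_pos.2 hi⟩
    have hlin : IsLinearMap ℝ fun x : Fin d → ℝ => ∑ i, x i :=
      ⟨fun x y => Finset.sum_add_distrib, fun c x => (Finset.mul_sum _ _ _).symm⟩
    have := convexHull_min hsub (convex_halfSpace_gt hlin 0) h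
    simp at this
  · have hzero : expToReal d 0 = 0 := funext fun _ => Nat.cast_zero
    exact hzero ▸ expToReal_mem_newtonPoly h

/-- The exponents of the minimal monomial generators of the monomial ideal with exponent set
`S`. -/
def minimalExponents (S : Set (Fin d → ℕ)) : Set (Fin d → ℕ) :=
  {v | Minimal (· ∈ S) v}

theorem finite_minimalExponents (S : Set (Fin d → ℕ)) : (minimalExponents S).Finite :=
  WellQuasiOrderedLE.finite_of_isAntichain (setOfPred_minimal_antichain _)

theorem newtonPoly_eq_upperClosure (hS : IsUpperSet S) :
    newtonPoly d S = upperClosure (convexHull ℝ (expToReal d '' minimalExponents S)) := by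
  refine Subset.antisymm ?_ (upperClosure_min (convexHull_mono (image_mono fun v hv => hv.prop))
    (isUpperSet_newtonPoly hS))
  have hconv : Convex ℝ
      (upperClosure (convexHull ℝ (expToReal d '' minimalExponents S)) : Set (Fin d → ℝ)) := by
    rintro x ⟨p, hp, hpx⟩ y ⟨q, hq, hqy⟩ a b ha hb hab
    exact ⟨a • p + b • q, convex_convexHull ℝ _ hp hq ha hb hab,
      add_le_add (smul_le_smul_of_nonneg_left hpx ha) (smul_le_smul_of_nonneg_left hqy hb)⟩
  refine convexHull_min ?_ hconv
  rintro _ ⟨s, hs, rfl⟩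
  obtain ⟨v, hvs, hv⟩ := exists_minimal_le_of_wellFoundedLT (· ∈ S) s hs
  exact ⟨expToReal d v, subset_convexHull ℝ _ ⟨v, hv, rfl⟩, expToReal_le_expToReal.2 hvs⟩

theorem isNewtonRegion_newtonPoly (hS : IsUpperSet S) (hne : S.Nonempty) (h0 : 0 ∉ S) :
    IsNewtonRegion (newtonPoly d S) where
  nonempty := (hne.image _).convexHull
  isClosed := by
    have hbdd : BddBelow (convexHull ℝ (expToReal d '' minimalExponents S)) :=
      ⟨0, convexHull_min (forall_mem_image.2 fun v _ => expToReal_nonneg v) (convex_Ici 0)⟩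
    rw [newtonPoly_eq_upperClosure hS]
    exact (((finite_minimalExponents S).image _).isClosed_convexHull ℝ).upperClosure_pi hbdd
  convex := convex_convexHull ℝ _
  isUpperSet := isUpperSet_newtonPoly hS
  zero_notMem := mt zero_mem_newtonPoly_iff.1 h0

theorem exists_orthant_sdiff_newtonPoly_subset_Icc (hS : IsUpperSet S) (hcof : Sᶜ.Finite) :
    ∃ b : Fin d → ℝ, Ici 0 \ newtonPoly d S ⊆ Icc 0 b := by
  obtain ⟨b, hb⟩ := hcof.bddAbove
  refine ⟨expToReal d b + 1, fun x ⟨hx0, hxS⟩ => ⟨hx0, fun i => ?_⟩⟩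
  by_contra! hlt
  have hmem : Pi.single i (b i + 1) ∈ S := by
    by_contra hnot
    simpa using hb hnot i
  refine hxS (isUpperSet_newtonPoly hS (fun j => ?_) (expToReal_mem_newtonPoly hmem))
  obtain rfl | hij := eq_or_ne j i
  · simpa [expToReal] using hlt.le
  · simpa [expToReal, hij] using hx0 j

/-- The exponent `c` at which the monomial `x^v` leaves the multiplier ideals `I(𝔞^c)` of the
monomial ideal `𝔞` with exponent set `S`, read off from the Newton polyhedron by Howald's
theorem. -/
noncomputable def jumpingNumber (S : Set (Fin d → ℕ)) (v : Fin d → ℕ) : ℝ :=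
  dilationLevel (newtonPoly d S) (expToReal d v + 1)

theorem multJump_eq_ncard (hP : IsNewtonRegion (newtonPoly d S)) {c : ℝ} (hc : 0 < c) :
    multJump d S c = {v | jumpingNumber S v = c}.ncard := by
  simp only [multJump, hP.mem_smul_sdiff_interior_iff (expToReal_add_one_pos _) hc,
    Nat.card_coe_set_eq, jumpingNumber]

theorem finite_jumpingNumber_le (hP : IsNewtonRegion (newtonPoly d S)) (hS : IsUpperSet S)
    (hcof : Sᶜ.Finite) (B : ℝ) :
    {v | jumpingNumber S v ≤ B}.Finite := by
  obtain ⟨b, hb⟩ := exists_orthant_sdiff_newtonPoly_subset_Icc hS hcof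
  obtain ⟨c, hBc, hc⟩ := ((eventually_gt_atTop B).and (eventually_gt_atTop 0)).exists
  refine (finite_Iic fun i => ⌊c * b i⌋₊).subset fun v hv i => Nat.le_floor ?_
  have hpos := expToReal_add_one_pos v
  have hnot : c⁻¹ • (expToReal d v + 1) ∉ newtonPoly d S := fun hmem =>
    (hv.trans_lt hBc).not_ge ((hP.mem_smul_iff hpos hc).1
      ((mem_smul_set_iff_inv_smul_mem₀ hc.ne' _ _).2 hmem))
  have hnonneg : 0 ≤ c⁻¹ • (expToReal d v + 1) :=
    smul_nonneg (inv_nonneg.2 hc.le) fun i => (hpos i).le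
  have hle : c⁻¹ * (v i + 1) ≤ b i := (hb ⟨hnonneg, hnot⟩).2 i
  linarith [(inv_mul_le_iff₀ hc).1 hle]

theorem isSkodaOrder_newtonPoly (hP : IsNewtonRegion (newtonPoly d S)) (hS : IsUpperSet S)
    (hcof : Sᶜ.Finite) :
    IsSkodaOrder (minimalExponents S) (jumpingNumber S) where
  add_one_le w hw v := by
    have := hP.dilationLevel_add_one_le (expToReal_add_one_pos v) (expToReal_mem_newtonPoly hw.prop)
    rwa [add_right_comm, ← expToReal_add] at this
  exists_bound := by
    classical
    set G := (finite_minimalExponents S).toFinset.image (expToReal d) with hG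
    have hPG : newtonPoly d S = upperClosure (convexHull ℝ (G : Set (Fin d → ℝ))) := by
      rw [newtonPoly_eq_upperClosure hS, hG, Finset.coe_image, Finite.coe_toFinset]
    have hG0 : ∀ g ∈ G, 0 ≤ g := Finset.forall_mem_image.2 fun w _ => expToReal_nonneg w
    refine ⟨G.card, fun v hv => ?_⟩
    obtain ⟨_, hg, hlt, hlevel⟩ :=
      exists_dilationLevel_sub_add_one_eq hP hPG hG0 (expToReal_add_one_pos v) hv
    obtain ⟨w, hw, rfl⟩ := Finset.mem_image.1 hg
    have hwv : w ≤ v := fun i => by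
      have hlti : (w i : ℝ) < v i + 1 := hlt i
      exact Nat.lt_succ_iff.1 (by exact_mod_cast hlti)
    obtain ⟨u, rfl⟩ := exists_add_of_le hwv
    refine ⟨w, (Finite.mem_toFinset _).1 hw, u, add_comm u w, ?_⟩
    rwa [expToReal_add, add_assoc, add_sub_cancel_left, ← add_assoc, ← expToReal_add] at hlevel
  finite_le := finite_jumpingNumber_le hP hS hcof

end NewtonPolyhedron

section Volume

variable {d : ℕ} {S : Set (Fin d → ℕ)}

theorem inter_inv_smul_span_eq_image {s : Set (Fin d → ℝ)} (hs : ∀ x ∈ s, ∀ i, 0 < x i) {n : ℕ}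
    (hn : n ≠ 0) :
    s ∩ (n : ℝ)⁻¹ • (Submodule.span ℤ (range (Pi.basisFun ℝ (Fin d))) : Set (Fin d → ℝ)) =
      (fun v => (n : ℝ)⁻¹ • (expToReal d v + 1)) ''
        {v | (n : ℝ)⁻¹ • (expToReal d v + 1) ∈ s} := by
  have : NeZero n := ⟨hn⟩
  have hn0 : (0 : ℝ) < n := Nat.cast_pos.2 (Nat.pos_of_ne_zero hn)
  refine Subset.antisymm (fun x ⟨hxs, hxL⟩ => ?_) (image_subset_iff.2 fun v hv => ⟨hv, ?_⟩)
  · have hcoord : ∀ i, ∃ m : ℕ, (m : ℝ) + 1 = n * x i := fun i => by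
      obtain ⟨z, hz⟩ := BoxIntegral.unitPartition.mem_smul_span_iff.1 hxL i
      have hz0 : 0 < z := Int.cast_pos.1 (hz.trans_gt (mul_pos hn0 (hs x hxs i)))
      obtain ⟨m, rfl⟩ := Int.eq_succ_of_zero_lt hz0
      exact ⟨m, by simpa using hz⟩
    choose v hv using hcoord
    have hvx : (n : ℝ)⁻¹ • (expToReal d v + 1) = x := by
      rw [inv_smul_eq_iff₀ hn0.ne']
      exact funext hv
    exact ⟨v, by rwa [mem_ofPred_eq, hvx], hvx⟩
  · exact BoxIntegral.unitPartition.mem_smul_span_iff.2 fun i =>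
      ⟨v i + 1, by simp [expToReal, hn]⟩

theorem tendsto_ncard_inv_smul_add_one_mem_div_pow {s : Set (Fin d → ℝ)}
    (hs : ∀ x ∈ s, ∀ i, 0 < x i) (hbdd : Bornology.IsBounded s) (hmeas : MeasurableSet s)
    (hfrontier : volume (frontier s) = 0) :
    Tendsto (fun n : ℕ => ({v | (n : ℝ)⁻¹ • (expToReal d v + 1) ∈ s}.ncard : ℝ) / (n : ℝ) ^ d)
      atTop (nhds (volume s).toReal) := by
  have hlim := tendsto_card_div_pow_atTop_volume s hbdd hmeas hfrontier
  rw [Fintype.card_fin] at hlim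
  refine hlim.congr' ((eventually_ne_atTop 0).mono fun n hn => ?_)
  have hinj : Function.Injective fun v : Fin d → ℕ => (n : ℝ)⁻¹ • (expToReal d v + 1) :=
    fun u v huv => funext fun i => by simpa [expToReal, hn] using congrFun huv i
  rw [inter_inv_smul_span_eq_image hs hn, Nat.card_coe_set_eq, ncard_image_of_injective _ hinj]

theorem volume_frontier_pos_orthant_sdiff_interior {P : Set (Fin d → ℝ)} (hP : Convex ℝ P) :
    volume (frontier ((Set.univ.pi fun _ => Ioi 0) \ interior P)) = 0 := by
  have horthant : Convex ℝ (Set.univ.pi fun _ : Fin d => Ioi (0 : ℝ)) :=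
    convex_pi fun _ _ => convex_Ioi 0
  refine measure_mono_null ?_
    (measure_union_null (horthant.addHaar_frontier volume) (hP.addHaar_frontier volume))
  rw [sdiff_eq]
  refine (frontier_inter_subset _ _).trans (union_subset_union inter_subset_left ?_)
  rw [frontier_compl]
  exact inter_subset_right.trans frontier_interior_subset

theorem pos_orthant_sdiff_interior_ae_eq {P : Set (Fin d → ℝ)} (hP : Convex ℝ P) :
    ((Set.univ.pi fun _ => Ioi 0) \ interior P : Set (Fin d → ℝ)) =ᵐ[volume]
      (Ici 0 \ P : Set (Fin d → ℝ)) :=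
  ae_eq_set_sdiff (Measure.univ_pi_Ioi_ae_eq_Ici (f := (0 : Fin d → ℝ)))
    (interior_ae_eq_of_null_frontier (hP.addHaar_frontier volume))

theorem tendsto_ncard_jumpingNumber_le_div_pow (hP : IsNewtonRegion (newtonPoly d S))
    (hS : IsUpperSet S) (hcof : Sᶜ.Finite) :
    Tendsto (fun n : ℕ => ({v | jumpingNumber S v ≤ n}.ncard : ℝ) / (n : ℝ) ^ d) atTop
      (nhds (volume (Ici 0 \ newtonPoly d S)).toReal) := by
  set O : Set (Fin d → ℝ) := Set.univ.pi fun _ => Ioi 0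
  have hbdd : Bornology.IsBounded (O \ interior (newtonPoly d S)) := by
    obtain ⟨b, hb⟩ := exists_orthant_sdiff_newtonPoly_subset_Icc hS hcof
    refine ((Metric.isBounded_Icc 0 b).subset hb).closure.subset ?_
    rw [sdiff_eq, ← closure_compl]
    refine (isOpen_set_pi finite_univ fun _ _ => isOpen_Ioi).inter_closure.trans (closure_mono ?_)
    exact inter_subset_inter_left _ fun x hx i => (hx i trivial).le
  have hmeas : MeasurableSet (O \ interior (newtonPoly d S)) :=
    (MeasurableSet.univ_pi fun _ => measurableSet_Ioi).diff measurableSet_interior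
  have hlim := tendsto_ncard_inv_smul_add_one_mem_div_pow (fun x hx i => hx.1 i trivial) hbdd
    hmeas (volume_frontier_pos_orthant_sdiff_interior hP.convex)
  rw [measure_congr (pos_orthant_sdiff_interior_ae_eq hP.convex)] at hlim
  refine hlim.congr' ((eventually_gt_atTop 0).mono fun n hn => ?_)
  have hn0 : (0 : ℝ) < n := Nat.cast_pos.2 hn
  congr 3
  ext v
  have hpos := expToReal_add_one_pos v
  have hO : (n : ℝ)⁻¹ • (expToReal d v + 1) ∈ O := fun i _ => mul_pos (inv_pos.2 hn0) (hpos i)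
  rw [mem_ofPred_eq, Set.mem_sdiff, and_iff_right hO, mem_ofPred_eq,
    ← mem_smul_set_iff_inv_smul_mem₀ hn0.ne', ← interior_smul₀ hn0.ne',
    hP.mem_interior_smul_iff hpos hn0, not_lt, jumpingNumber]

end Volume

section UnitIdeal

variable {d : ℕ} {S : Set (Fin d → ℕ)}

theorem Ici_zero_subset_newtonPoly (hS : IsUpperSet S) (h0 : 0 ∈ S) : Ici 0 ⊆ newtonPoly d S :=
  fun _ hx => isUpperSet_newtonPoly hS hx (zero_mem_newtonPoly_iff.2 h0)

theorem multJump_eq_zero_of_zero_mem (hS : IsUpperSet S) (h0 : 0 ∈ S) {c : ℝ} (hc : 0 < c) :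
    multJump d S c = 0 := by
  have hint : ∀ v, expToReal d v + 1 ∈ interior (c • newtonPoly d S) := fun v =>
    (isUpperSet_smul (isUpperSet_newtonPoly hS) hc).mem_interior_of_forall_lt (x := 0)
      (subset_closure ⟨0, zero_mem_newtonPoly_iff.2 h0, smul_zero c⟩) (expToReal_add_one_pos v)
  simp [multJump, hint]

end UnitIdeal

/-- Monomial case of Theorem 4.10: for a cofinite monomial ideal `𝔞`, the Rees coefficient
`ρ_c = lim m(c+n)/n^(d-1)` exists for all `c ∈ (0,1]`, vanishes for all but finitely many
such `c`, and the sum `∑_{c ∈ (0,1]} ρ_c` equals `e(𝔞)/(d-1)! = d · vol(ℝ_{≥0}^d \ P(𝔞))`. -/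
theorem sum_of_rees_coefficients_eq_multiplicity (d : ℕ) (hd : 1 ≤ d) (k : Type*) [Field k]
    (S : Set (Fin d → ℕ)) (hS : ∀ v ∈ S, ∀ w : Fin d → ℕ, v + w ∈ S)
    (hcof : (Sᶜ : Set (Fin d → ℕ)).Finite) :
    ∃ ρ : ℝ → ℝ,
      (∀ c ∈ Set.Ioc (0 : ℝ) 1,
        Tendsto (fun n : ℕ => (multJump d S (c + n) : ℝ) / (n : ℝ) ^ (d - 1))
          atTop (nhds (ρ c))) ∧
      {c ∈ Set.Ioc (0 : ℝ) 1 | ρ c ≠ 0}.Finite ∧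
      (∑ᶠ c ∈ Set.Ioc (0 : ℝ) 1, ρ c) =
        d * (volume ({x : Fin d → ℝ | ∀ i, 0 ≤ x i} \ newtonPoly d S)).toReal := by
  have hupper : IsUpperSet S := fun v w hvw hv => add_tsub_cancel_of_le hvw ▸ hS v hv (w - v)
  have hpos : ∀ c ∈ Ioc (0 : ℝ) 1, ∀ n : ℕ, 0 < c + n := fun c hc n =>
    add_pos_of_pos_of_nonneg hc.1 n.cast_nonneg
  change ∃ ρ : ℝ → ℝ, _ ∧ _ ∧ _ = d * (volume (Ici 0 \ newtonPoly d S)).toReal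
  by_cases h0 : 0 ∈ S
  · refine ⟨0, fun c hc => ?_, by simp, ?_⟩
    · simp [multJump_eq_zero_of_zero_mem hupper h0 (hpos c hc _)]
    · simp [sdiff_eq_empty.2 (Ici_zero_subset_newtonPoly hupper h0)]
  obtain ⟨e, rfl⟩ : ∃ e, d = e + 1 := ⟨d - 1, by omega⟩
  have hne : S.Nonempty := compl_compl S ▸ hcof.infinite_compl.nonempty
  have hP := isNewtonRegion_newtonPoly hupper hne h0
  obtain ⟨ρ, hρ, hfin, hsum⟩ := (isSkodaOrder_newtonPoly hP hupper hcof).exists_reesCoefficients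
    (finite_minimalExponents S) (tendsto_ncard_jumpingNumber_le_div_pow hP hupper hcof)
  refine ⟨ρ, fun c hc => ?_, hfin, by exact_mod_cast hsum⟩
  simpa only [multJump_eq_ncard hP (hpos c hc _), Nat.add_sub_cancel] using hρ c hc
end

section
/- Let 𝔞 be a cofinite monomial ideal in k[x₁,…,x_d]. For every positive integer n the set {v ∈ ℕ^d : v + 𝟏 ∉ int(n•P(𝔞))} is finite, and the limit as n → ∞ of #{v ∈ ℕ^d : v + 𝟏 ∉ int(n•P(𝔞))}/n^d equals vol(ℝ_{≥0}^d \ P(𝔞)), which is finite. (Monomial case of Lemma 4.9: the colengths dim_k(R/I(𝔞^n)) of the multiplier ideals grow with leading term given by the normalized Hilbert–Samuel multiplicity, here expressed as the covolume of the Newton polyhedron.) -/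
open Set Filter Pointwise MeasureTheory

/-!
Rescaling by `n⁻¹` turns the exponents `v` counted by the colength into the points of the lattice
`n⁻¹ • ℤ^d` in the bounded region `D` cut out of the open orthant by `int P(𝔞)`: the shift by `𝟏`
makes `v + 𝟏` range over exactly the lattice points with positive coordinates. The region `D` is
bounded because a point `x ≥ 0` lies in the convex hull of the lattice points above its
coordinatewise floor, so that `x ∉ P(𝔞)` forces one of those to be among the finitely many
exponents missing from `S(𝔞)`. The frontier of `D` is a null set because the Newton polyhedron is
convex. Hence the number of points of `n⁻¹ • ℤ^d` in `D`, divided by `n ^ d`, tends to the volume of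
`D`, and `D` differs from `ℝ_{≥0}^d \ P(𝔞)` by a null set only.
-/

open Bornology

section OrthantComplement

variable {ι : Type*} {P : Set (ι → ℝ)}

/-- The complement of `P` in the orthant, whose volume is the covolume of `P`. The open orthant and
the interior of `P` are used because the exponents counted by the colength correspond to the
lattice points of exactly this set. -/
def orthantComplement (P : Set (ι → ℝ)) : Set (ι → ℝ) :=
  (univ.pi fun _ ↦ Ioi 0) \ interior P

lemma smul_orthantComplement {c : ℝ} (hc : 0 < c) :
    c • orthantComplement P = orthantComplement (c • P) := by
  ext x
  simp [orthantComplement, interior_smul₀ hc.ne', mem_smul_set_iff_inv_smul_mem₀ hc.ne', hc]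

lemma natCast_comp_add_one_injective :
    Function.Injective (fun v : ι → ℕ ↦ (Nat.cast ∘ v + 1 : ι → ℝ)) :=
  (add_left_injective 1).comp (Nat.cast_injective.comp_left)

section Lattice

variable [Finite ι]

lemma mem_span_range_basisFun_iff {y : ι → ℝ} :
    y ∈ Submodule.span ℤ (range (Pi.basisFun ℝ ι)) ↔ ∀ i, ∃ z : ℤ, (z : ℝ) = y i := by
  simp [Module.Basis.mem_span_iff_repr_mem]

lemma range_natCast_comp_add_one :
    range (fun v : ι → ℕ ↦ (Nat.cast ∘ v + 1 : ι → ℝ)) =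
      (univ.pi fun _ ↦ Ioi 0) ∩ Submodule.span ℤ (range (Pi.basisFun ℝ ι)) := by
  ext y
  simp only [mem_range, mem_inter_iff, mem_univ_pi, mem_Ioi, SetLike.mem_coe,
    mem_span_range_basisFun_iff]
  constructor
  · rintro ⟨v, rfl⟩
    exact ⟨fun i ↦ Nat.cast_add_one_pos (v i), fun i ↦ ⟨v i + 1, by simp⟩⟩
  · rintro ⟨hpos, hint⟩
    choose z hz using hint
    have hz_pos (i : ι) : 0 < z i := by exact_mod_cast (hz i).symm ▸ hpos i
    choose v hv using fun i ↦ Int.eq_succ_of_zero_lt (hz_pos i)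
    exact ⟨v, funext fun i ↦ by simp [← hz, hv]⟩

lemma image_natCast_comp_add_one :
    (fun v : ι → ℕ ↦ (Nat.cast ∘ v + 1 : ι → ℝ)) '' {v | Nat.cast ∘ v + 1 ∉ interior P} =
      orthantComplement P ∩ Submodule.span ℤ (range (Pi.basisFun ℝ ι)) := by
  rw [orthantComplement, sdiff_eq, inter_right_comm, ← range_natCast_comp_add_one, inter_comm,
    ← image_preimage_eq_inter_range]
  rfl

lemma card_notMem_interior_smul {c : ℝ} (hc : 0 < c) :
    Nat.card {v : ι → ℕ | (Nat.cast ∘ v + 1 : ι → ℝ) ∉ interior (c • P)} =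
      Nat.card ↑(orthantComplement P ∩
        c⁻¹ • (Submodule.span ℤ (range (Pi.basisFun ℝ ι)) : Set (ι → ℝ))) := by
  rw [← Nat.card_image_of_injective natCast_comp_add_one_injective, image_natCast_comp_add_one,
    ← smul_orthantComplement hc, ← natCard_smul_set₀ (inv_ne_zero hc.ne'),
    smul_set_inter₀ (inv_ne_zero hc.ne'), inv_smul_smul₀ hc.ne']

lemma orthantComplement_subset_closure :
    orthantComplement P ⊆ closure (Ici 0 \ P) := by
  have hopen : IsOpen (univ.pi fun _ : ι ↦ Ioi (0 : ℝ)) :=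
    isOpen_set_pi finite_univ fun _ _ ↦ isOpen_Ioi
  rw [orthantComplement, sdiff_eq, ← closure_compl]
  exact hopen.inter_closure.trans <|
    closure_mono fun x hx ↦ ⟨fun i ↦ (hx.1 i trivial).le, hx.2⟩

lemma isBounded_orthantComplement (hbdd : IsBounded (Ici 0 \ P)) :
    IsBounded (orthantComplement P) := by
  cases nonempty_fintype ι
  exact hbdd.closure.subset orthantComplement_subset_closure

lemma measurableSet_orthantComplement : MeasurableSet (orthantComplement P) :=
  (MeasurableSet.univ_pi fun _ ↦ measurableSet_Ioi).diff isOpen_interior.measurableSet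

lemma finite_notMem_interior_smul {c : ℝ} (hc : 0 < c) (hbdd : IsBounded (Ici 0 \ P)) :
    {v : ι → ℕ | (Nat.cast ∘ v + 1 : ι → ℝ) ∉ interior (c • P)}.Finite := by
  cases nonempty_fintype ι
  refine Finite.of_finite_image ?_ natCast_comp_add_one_injective.injOn
  rw [image_natCast_comp_add_one, ← smul_orthantComplement hc]
  exact ZSpan.setFinite_inter _ ((isBounded_orthantComplement hbdd).smul₀ c)

end Lattice

section Region

variable [Fintype ι]

lemma volume_frontier_orthantComplement (hP : volume (frontier P) = 0) :
    volume (frontier (orthantComplement P)) = 0 := by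
  have horthant : Convex ℝ (univ.pi fun _ : ι ↦ Ioi (0 : ℝ)) := convex_pi fun _ _ ↦ convex_Ioi 0
  refine measure_mono_null ?_ (measure_union_null (horthant.addHaar_frontier volume) hP)
  calc frontier (orthantComplement P)
      ⊆ frontier (univ.pi fun _ ↦ Ioi 0) ∪ frontier (interior P)ᶜ :=
        (frontier_inter_subset _ _).trans (union_subset_union inter_subset_left inter_subset_right)
    _ ⊆ frontier (univ.pi fun _ ↦ Ioi 0) ∪ frontier P := by
        rw [frontier_compl]
        exact union_subset_union_right _ frontier_interior_subset

lemma orthantComplement_ae_eq (hP : volume (frontier P) = 0) :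
    orthantComplement P =ᵐ[volume] (Ici 0 \ P : Set (ι → ℝ)) :=
  (Measure.univ_pi_Ioi_ae_eq_Ici (μ := fun _ : ι ↦ volume)).diff
    (interior_ae_eq_of_null_frontier hP)

theorem tendsto_card_notMem_interior_smul_div_pow (hbdd : IsBounded (Ici 0 \ P))
    (hP : volume (frontier P) = 0) :
    Tendsto (fun n : ℕ ↦
        (Nat.card {v : ι → ℕ | (Nat.cast ∘ v + 1 : ι → ℝ) ∉ interior ((n : ℝ) • P)} : ℝ) /
          (n : ℝ) ^ Fintype.card ι)
      atTop (nhds (volume (Ici 0 \ P)).toReal) := by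
  rw [← measure_congr (orthantComplement_ae_eq hP)]
  refine (tendsto_card_div_pow_atTop_volume _ (isBounded_orthantComplement hbdd)
    measurableSet_orthantComplement (volume_frontier_orthantComplement hP)).congr' ?_
  filter_upwards [eventually_gt_atTop 0] with n hn
  rw [card_notMem_interior_smul (Nat.cast_pos.2 hn)]

end Region

lemma mem_convexHull_natCast_Ici_floor {x : ℝ} (hx : 0 ≤ x) :
    x ∈ convexHull ℝ (Nat.cast '' Ici ⌊x⌋₊) := by
  have hsegment : x ∈ segment ℝ (⌊x⌋₊ : ℝ) (⌊x⌋₊ + 1 : ℕ) := by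
    rw [segment_eq_Icc (by simp)]
    exact ⟨Nat.floor_le hx, by exact_mod_cast (Nat.lt_floor_add_one x).le⟩
  exact segment_subset_convexHull (mem_image_of_mem _ self_mem_Ici)
    (mem_image_of_mem _ (Nat.le_succ _)) hsegment

section ConvexHull

variable [Finite ι]

lemma mem_convexHull_natCast_comp_Ici_floor {x : ι → ℝ} (hx : 0 ≤ x) :
    x ∈ convexHull ℝ ((fun v : ι → ℕ ↦ (Nat.cast ∘ v : ι → ℝ)) '' Ici fun i ↦ ⌊x i⌋₊) := by
  have himage : (fun v : ι → ℕ ↦ (Nat.cast ∘ v : ι → ℝ)) '' Ici (fun i ↦ ⌊x i⌋₊) =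
      univ.pi fun i ↦ Nat.cast '' Ici ⌊x i⌋₊ := by
    rw [← pi_univ_Ici]
    exact piMap_image_univ_pi (fun _ ↦ Nat.cast) _
  rw [himage, convexHull_pi]
  exact fun i _ ↦ mem_convexHull_natCast_Ici_floor (hx i)

lemma isBounded_Ici_sdiff_convexHull {S : Set (ι → ℕ)} (hS : Sᶜ.Finite) :
    IsBounded (Ici 0 \ convexHull ℝ ((fun v : ι → ℕ ↦ (Nat.cast ∘ v : ι → ℝ)) '' S)) := by
  cases nonempty_fintype ι
  obtain ⟨u, hu⟩ := hS.bddAbove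
  refine (Metric.isBounded_Icc (0 : ι → ℝ) (Nat.cast ∘ u + 1)).subset fun x ⟨hx, hxS⟩ ↦ ⟨hx, ?_⟩
  obtain ⟨v, hxv, hvS⟩ : ∃ v ∈ Ici fun i ↦ ⌊x i⌋₊, v ∉ S :=
    not_subset.1 fun hsub ↦ hxS <|
      convexHull_mono (image_mono hsub) (mem_convexHull_natCast_comp_Ici_floor hx)
  intro i
  calc x i ≤ ⌊x i⌋₊ + 1 := (Nat.lt_floor_add_one _).le
    _ ≤ u i + 1 := by gcongr; exact (hxv i).trans (hu hvS i)

end ConvexHull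

theorem colength_of_multiplier_ideals_asymptotics_general [Fintype ι]
    (hbdd : IsBounded (Ici 0 \ P)) (hP : volume (frontier P) = 0) :
    (∀ n : ℕ, 0 < n →
      {v : ι → ℕ | (Nat.cast ∘ v + 1 : ι → ℝ) ∉ interior ((n : ℝ) • P)}.Finite) ∧
    volume (Ici 0 \ P) ≠ ⊤ ∧
    Tendsto (fun n : ℕ ↦
        (Nat.card {v : ι → ℕ | (Nat.cast ∘ v + 1 : ι → ℝ) ∉ interior ((n : ℝ) • P)} : ℝ) /
          (n : ℝ) ^ Fintype.card ι)
      atTop (nhds (volume (Ici 0 \ P)).toReal) :=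
  ⟨fun _ hn ↦ finite_notMem_interior_smul (Nat.cast_pos.2 hn) hbdd, hbdd.measure_lt_top.ne,
    tendsto_card_notMem_interior_smul_div_pow hbdd hP⟩

end OrthantComplement

/-- Monomial case of Lemma 4.9: for a cofinite monomial ideal, the colength
`dim_k(R/I(𝔞^n)) = #{v : v + 𝟏 ∉ int(n•P(𝔞))}` is finite for each `n ≥ 1`, and
`dim_k(R/I(𝔞^n))/n^d` tends to `vol(ℝ_{≥0}^d \ P(𝔞))`, which is finite. -/
theorem colength_of_multiplier_ideals_asymptotics (d : ℕ) (hd : 1 ≤ d) (k : Type*) [Field k]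
    (S : Set (Fin d → ℕ)) (hS : ∀ v ∈ S, ∀ w : Fin d → ℕ, v + w ∈ S)
    (hcof : (Sᶜ : Set (Fin d → ℕ)).Finite) :
    (∀ n : ℕ, 0 < n →
      {v : Fin d → ℕ |
        expToReal d v + 1 ∉ interior ((n : ℝ) • newtonPoly d S)}.Finite) ∧
    volume ({x : Fin d → ℝ | ∀ i, 0 ≤ x i} \ newtonPoly d S) ≠ ⊤ ∧
    Tendsto (fun n : ℕ =>
        (Nat.card {v : Fin d → ℕ |
          expToReal d v + 1 ∉ interior ((n : ℝ) • newtonPoly d S)} : ℝ) / (n : ℝ) ^ d)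
      atTop (nhds (volume ({x : Fin d → ℝ | ∀ i, 0 ≤ x i} \ newtonPoly d S)).toReal) := by
  have h := colength_of_multiplier_ideals_asymptotics_general (isBounded_Ici_sdiff_convexHull hcof)
    ((convex_convexHull ℝ _).addHaar_frontier volume)
  rwa [Fintype.card_fin] at h
end

section
/- Let ℓ ≥ 1 and let Q ⊆ ℝ^ℓ be a compact convex set with nonempty interior. Let (c_n) be a sequence of positive real numbers with c_n → ∞, and let (t_n) be an arbitrary sequence of vectors in ℝ^ℓ. Then #((t_n + c_n • Q) ∩ ℤ^ℓ)/c_n^ℓ → vol(Q) as n → ∞, where t_n + c_n • Q = {t_n + c_n·q : q ∈ Q}. (The generalized lattice-point counting formula stated and used in the proof of Theorem 5.2: the number of lattice points in a possibly non-integrally translated dilate of a convex body is asymptotic to the volume of the dilate.) -/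
open Set Filter Pointwise MeasureTheory

/-!
Rounding `y` down to the affine lattice `c⁻¹ • (ℤ^ι - t)` moves it by at most `c⁻¹`, and the cells
of this rounding are cubes of volume `c⁻¹ ^ #ι`. Hence the normalized number of lattice points in
`t + c • Q` is the volume of the set of points that are rounded into `Q`. A point which lies in only
one of this set and `Q` is within `c⁻¹` of the frontier of `Q`, so the counting error is at most the
volume of the `c⁻¹`-thickening of the frontier, uniformly in `t`. That volume tends to `0` because
the frontier of a convex body is a compact null set.
-/

open Bornology Metric
open scoped Topology symmDiff

theorem abs_measureReal_sub_le_of_symmDiff_subset {X : Type*} [MeasurableSpace X] {μ : Measure X}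
    {s t u : Set X} (h : s ∆ t ⊆ u) (ht : μ t ≠ ⊤) (hu : μ u ≠ ⊤) :
    |μ.real s - μ.real t| ≤ μ.real u := by
  obtain ⟨hst, hts⟩ : s ⊆ t ∪ u ∧ t ⊆ s ∪ u := symmDiff_le_iff.1 h
  have hs : μ s ≠ ⊤ := measure_ne_top_of_subset hst (measure_union_ne_top ht hu)
  rw [abs_sub_le_iff, sub_le_iff_le_add', sub_le_iff_le_add']
  constructor
  · calc μ.real s ≤ μ.real (t ∪ u) := measureReal_mono hst (measure_union_ne_top ht hu)
      _ ≤ μ.real t + μ.real u := measureReal_union_le t u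
  · calc μ.real t ≤ μ.real (s ∪ u) := measureReal_mono hts (measure_union_ne_top hs hu)
      _ ≤ μ.real s + μ.real u := measureReal_union_le s u

section Frontier

variable {E : Type*} [NormedAddCommGroup E] [NormedSpace ℝ E] [FiniteDimensional ℝ E]

theorem mem_cthickening_frontier_of_dist_le {s : Set E} {x y : E} {δ : ℝ}
    (hx : x ∈ s) (hy : y ∉ s) (hxy : dist x y ≤ δ) : x ∈ cthickening δ (frontier s) := by
  obtain ⟨z, hz, hxz⟩ :=
    exists_mem_frontier_infDist_compl_eq_dist hx ((ne_univ_iff_exists_notMem s).2 ⟨y, hy⟩)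
  refine mem_cthickening_of_dist_le x z δ _ hz ?_
  calc dist x z = infDist x sᶜ := hxz.symm
    _ ≤ dist x y := infDist_le_dist_of_mem hy
    _ ≤ δ := hxy

theorem preimage_symmDiff_subset_cthickening_frontier {f : E → E} {δ : ℝ}
    (hf : ∀ x, dist (f x) x ≤ δ) (s : Set E) :
    (f ⁻¹' s) ∆ s ⊆ cthickening δ (frontier s) := by
  have hf' (x : E) : dist x (f x) ≤ δ := dist_comm x (f x) ▸ hf x
  rintro x (⟨hfx, hx⟩ | ⟨hx, hfx⟩)
  · rw [← frontier_compl]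
    exact mem_cthickening_frontier_of_dist_le hx (not_not_intro hfx) (hf' x)
  · exact mem_cthickening_frontier_of_dist_le hx hfx (hf' x)

theorem abs_measureReal_preimage_sub_le [MeasurableSpace E] {μ : Measure E}
    [IsFiniteMeasureOnCompacts μ] {f : E → E} {δ : ℝ} (hf : ∀ x, dist (f x) x ≤ δ)
    {s : Set E} (hs : IsBounded s) :
    |μ.real (f ⁻¹' s) - μ.real s| ≤ μ.real (cthickening δ (frontier s)) :=
  abs_measureReal_sub_le_of_symmDiff_subset
    (preimage_symmDiff_subset_cthickening_frontier hf s) hs.measure_lt_top.ne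
    (hs.closure.subset frontier_subset_closure).cthickening.measure_lt_top.ne

end Frontier

section Floor

variable {ι : Type*}

/-- Rounding down to the affine lattice `c⁻¹ • (ℤ^ι - t)`: the map `y ↦ t + c • y`, followed by the
coordinatewise floor and transported back. The volume of `affineFloor t c ⁻¹' Q` counts the lattice
points in `t + c • Q`, see `measureReal_preimage_affineFloor`. -/
noncomputable def affineFloor (t : ι → ℝ) (c : ℝ) (y : ι → ℝ) : ι → ℝ :=
  c⁻¹ • ((fun i ↦ (⌊(t + c • y) i⌋ : ℝ)) - t)

theorem preimage_affineFloor (t : ι → ℝ) {c : ℝ} (hc : c ≠ 0) (Q : Set (ι → ℝ)) :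
    affineFloor t c ⁻¹' Q = (c • ·) ⁻¹' ((t + ·) ⁻¹' ((fun (x : ι → ℝ) i ↦ ⌊x i⌋) ⁻¹'
      {v | ∃ q ∈ Q, (fun i ↦ (v i : ℝ)) = t + c • q})) := by
  ext y
  constructor
  · intro hy
    exact ⟨affineFloor t c y, hy, by simp only [affineFloor, smul_inv_smul₀ hc, add_sub_cancel]⟩
  · rintro ⟨q, hq, hfloor⟩
    simpa only [mem_preimage, affineFloor, hfloor, add_sub_cancel_left, inv_smul_smul₀ hc] using hq

variable [Fintype ι]

theorem measurePreserving_pi_floor :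
    MeasurePreserving (fun (x : ι → ℝ) i ↦ ⌊x i⌋) volume Measure.count := by
  have hmeas : Measurable (fun (x : ι → ℝ) i ↦ ⌊x i⌋) := by fun_prop
  refine ⟨hmeas, Measure.ext_of_singleton fun v ↦ ?_⟩
  have hcell : (fun (x : ι → ℝ) i ↦ ⌊x i⌋) ⁻¹' {v} =
      Set.pi univ fun i ↦ Ico (v i : ℝ) (v i + 1) := by
    ext x
    simp [funext_iff, Int.floor_eq_iff]
  rw [Measure.map_apply hmeas (measurableSet_singleton v), hcell, Real.volume_pi_Ico]
  simp

theorem measureReal_preimage_pi_floor (S : Set (ι → ℤ)) :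
    volume.real ((fun (x : ι → ℝ) i ↦ ⌊x i⌋) ⁻¹' S) = Nat.card S := by
  have hS : MeasurableSet S := S.to_countable.measurableSet
  rw [measureReal_def, measurePreserving_pi_floor.measure_preimage hS.nullMeasurableSet,
    Measure.count_apply hS, Nat.card_coe_set_eq, Set.ncard]
  cases S.encard <;> simp

theorem dist_affineFloor_le (t y : ι → ℝ) {c : ℝ} (hc : 0 < c) :
    dist (affineFloor t c y) y ≤ c⁻¹ := by
  refine (dist_pi_le_iff (inv_nonneg.2 hc.le)).2 fun i ↦ ?_
  have hfract : affineFloor t c y i - y i = c⁻¹ * -Int.fract (t i + c * y i) := by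
    simp only [affineFloor, Pi.smul_apply, Pi.sub_apply, Pi.add_apply, smul_eq_mul, Int.fract]
    field_simp
    ring
  rw [Real.dist_eq, hfract, abs_mul, abs_neg, Int.abs_fract, abs_of_pos (inv_pos.2 hc)]
  exact mul_le_of_le_one_right (inv_nonneg.2 hc.le) (Int.fract_lt_one _).le

theorem measureReal_preimage_affineFloor (t : ι → ℝ) {c : ℝ} (hc : 0 < c) (Q : Set (ι → ℝ)) :
    volume.real (affineFloor t c ⁻¹' Q) =
      (Nat.card {v : ι → ℤ | ∃ q ∈ Q, (fun i ↦ (v i : ℝ)) = t + c • q} : ℝ) /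
        c ^ Fintype.card ι := by
  rw [preimage_affineFloor t hc.ne', measureReal_def, Measure.addHaar_preimage_smul _ hc.ne',
    measure_preimage_add, ENNReal.toReal_mul, ENNReal.toReal_ofReal (abs_nonneg _),
    ← measureReal_def, measureReal_preimage_pi_floor, Module.finrank_fintype_fun_eq_card,
    abs_of_pos (by positivity), div_eq_inv_mul]

end Floor

section Counting

variable {ι : Type*} [Fintype ι] {Q : Set (ι → ℝ)}

theorem abs_card_lattice_points_div_sub_volume_le (hQ : IsBounded Q) (t : ι → ℝ) {c : ℝ}
    (hc : 0 < c) :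
    |(Nat.card {v : ι → ℤ | ∃ q ∈ Q, (fun i ↦ (v i : ℝ)) = t + c • q} : ℝ) /
        c ^ Fintype.card ι - volume.real Q| ≤ volume.real (cthickening c⁻¹ (frontier Q)) := by
  rw [← measureReal_preimage_affineFloor t hc]
  exact abs_measureReal_preimage_sub_le (fun y ↦ dist_affineFloor_le t y hc) hQ

theorem lattice_points_in_translated_dilates_general {α : Type*} {l : Filter α}
    (hQ : IsBounded Q) (hQfrontier : volume (frontier Q) = 0)
    {c : α → ℝ} (hc : Tendsto c l atTop) (t : α → ι → ℝ) :
    Tendsto (fun n ↦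
        (Nat.card {v : ι → ℤ | ∃ q ∈ Q, (fun i ↦ (v i : ℝ)) = t n + c n • q} : ℝ) /
          c n ^ Fintype.card ι)
      l (𝓝 (volume.real Q)) := by
  have hcompact : IsCompact (frontier Q) :=
    isCompact_of_isClosed_isBounded isClosed_frontier (hQ.closure.subset frontier_subset_closure)
  have hlayer : Tendsto (fun n ↦ volume.real (cthickening (c n)⁻¹ (frontier Q))) l (𝓝 0) := by
    have hthick := tendsto_measure_cthickening_of_isCompact (μ := volume) hcompact
    rw [hQfrontier] at hthick
    exact (ENNReal.tendsto_toReal ENNReal.zero_ne_top).comp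
      (hthick.comp (tendsto_inv_atTop_zero.comp hc))
  refine tendsto_iff_dist_tendsto_zero.2 (squeeze_zero' (.of_forall fun _ ↦ dist_nonneg) ?_ hlayer)
  filter_upwards [hc.eventually_gt_atTop 0] with n hn
  exact abs_card_lattice_points_div_sub_volume_le hQ (t n) hn

end Counting

/-- The generalized lattice-point counting formula used in the proof of Theorem 5.2:
for a compact convex body `Q ⊆ ℝ^ℓ` with nonempty interior, dilation factors `c_n → ∞`
and arbitrary translation vectors `t_n`, the number of lattice points in `t_n + c_n • Q`
is asymptotic to `c_n^ℓ · vol(Q)`. -/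
theorem lattice_points_in_translated_dilates (ℓ : ℕ) (hℓ : 1 ≤ ℓ)
    (Q : Set (Fin ℓ → ℝ)) (hQcpt : IsCompact Q) (hQconv : Convex ℝ Q)
    (hQint : (interior Q).Nonempty)
    (c : ℕ → ℝ) (hcpos : ∀ n, 0 < c n) (hctop : Tendsto c atTop atTop)
    (t : ℕ → (Fin ℓ → ℝ)) :
    Tendsto (fun n : ℕ =>
        (Nat.card {v : Fin ℓ → ℤ |
            ∃ q ∈ Q, (fun i => (v i : ℝ)) = t n + c n • q} : ℝ) / c n ^ ℓ)
      atTop (nhds (volume Q).toReal) := by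
  simpa only [Fintype.card_fin, measureReal_def] using lattice_points_in_translated_dilates_general
    hQcpt.isBounded (hQconv.addHaar_frontier volume) hctop t
end

section
/- Let 𝔞 be a cofinite monomial ideal in k[x₁,…,x_d]. Then for every real number c > 0 the set {v ∈ ℕ^d : v + 𝟏 ∈ c•P(𝔞) \ int(c•P(𝔞))} is finite; that is, the multiplicity m(c) is a well-defined natural number. (Finiteness of the multiplicity of any candidate jumping number of a cofinite monomial ideal, implicit in Theorem 5.2 and Lemma 5.3.) -/
open Set Filter Pointwise MeasureTheory

/-! The ideal `𝔞` contains arbitrarily high powers of each variable, so by convexity `P(𝔞)` contains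
the far end of every coordinate half-axis. A convex set containing the far ends of all coordinate
half-axes contains every nonnegative vector `x` with large coordinate sum `s`, because `x` is a
convex combination of the `s • eᵢ`; the strictly positive such vectors form an open set, hence lie
in the interior. Only finitely many `v ∈ ℕ^d` have bounded coordinate sum, so `v + 𝟏` is interior to
`c • P(𝔞)` for all but finitely many `v`. -/

lemma eventually_atTop_mem_of_frequently_of_ordConnected {α : Type*} [Preorder α]
    [IsDirectedOrder α] [Nonempty α] {s : Set α} (hs : s.OrdConnected)
    (h : ∃ᶠ a in atTop, a ∈ s) : ∀ᶠ a in atTop, a ∈ s := by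
  obtain ⟨a, ha⟩ := h.exists
  filter_upwards [eventually_ge_atTop a] with t hat
  obtain ⟨b, htb, hb⟩ := frequently_atTop.mp h t
  exact hs.out ha hb ⟨hat, htb⟩

lemma tendsto_sum_cofinite_atTop (ι : Type*) [Fintype ι] :
    Tendsto (fun v : ι → ℕ => ∑ i, v i) cofinite atTop := by
  classical
  refine tendsto_atTop.mpr fun N => eventually_cofinite.mpr ?_
  refine (finite_Iic fun _ : ι => N).subset fun v hv i => ?_
  exact (Finset.single_le_sum_of_canonicallyOrdered (Finset.mem_univ i)).trans (not_le.mp hv).le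

lemma frequently_single_mem_of_finite_compl {ι : Type*} [DecidableEq ι] {S : Set (ι → ℕ)}
    (hS : Sᶜ.Finite) (i : ι) : ∃ᶠ n in atTop, Pi.single i n ∈ S := by
  have hmem : ∀ᶠ v in cofinite, v ∈ S := mem_cofinite.mpr hS
  rw [← Nat.cofinite_eq_atTop]
  exact ((Pi.single_injective i).tendsto_cofinite.eventually hmem).frequently

section Orthant

variable {ι : Type*}

lemma eventually_single_mem_smul {𝕜 : Type*} [Field 𝕜] [LinearOrder 𝕜] [IsStrictOrderedRing 𝕜]
    [DecidableEq ι] {P : Set (ι → 𝕜)} {c : 𝕜} (hc : 0 < c) {i : ι}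
    (h : ∀ᶠ t in atTop, Pi.single i t ∈ P) : ∀ᶠ t in atTop, Pi.single i t ∈ c • P := by
  filter_upwards [(tendsto_id.const_mul_atTop (inv_pos.mpr hc)).eventually h] with t ht
  rwa [mem_smul_set_iff_inv_smul_mem₀ hc.ne', ← Pi.single_smul']

variable [Fintype ι]

lemma isOpen_setOf_pos_and_lt_sum (R : ℝ) :
    IsOpen {x : ι → ℝ | (∀ i, 0 < x i) ∧ R < ∑ i, x i} := by
  simp only [ofPred_and, ofPred_forall]
  exact (isOpen_iInter_of_finite fun i => isOpen_lt continuous_const (continuous_apply i)).inter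
    (isOpen_lt continuous_const (by fun_prop))

variable [DecidableEq ι]

lemma mem_of_single_sum_mem_of_convex {𝕜 : Type*} [Field 𝕜] [LinearOrder 𝕜]
    [IsStrictOrderedRing 𝕜] {P : Set (ι → 𝕜)} (hP : Convex 𝕜 P) {x : ι → 𝕜} (hx : ∀ i, 0 ≤ x i)
    (hpos : 0 < ∑ i, x i) (hmem : ∀ i, Pi.single i (∑ j, x j) ∈ P) : x ∈ P := by
  set s := ∑ i, x i
  have hweights : ∑ i, x i / s = 1 := by rw [← Finset.sum_div, div_self hpos.ne']
  have hcomb : ∑ i, (x i / s) • Pi.single i s = x := by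
    ext j
    simp [Finset.sum_apply, Pi.single_apply, hpos.ne']
  rw [← hcomb]
  exact hP.sum_mem (fun i _ => div_nonneg (hx i) hpos.le) hweights fun i _ => hmem i

lemma eventually_mem_interior_of_lt_sum_of_convex {P : Set (ι → ℝ)} (hP : Convex ℝ P)
    (haxes : ∀ i, ∀ᶠ t in atTop, Pi.single i t ∈ P) :
    ∀ᶠ R in atTop, ∀ x : ι → ℝ, (∀ i, 0 < x i) → R < ∑ i, x i → x ∈ interior P := by
  have hfar : ∀ᶠ s : ℝ in atTop, (∀ i, Pi.single i s ∈ P) ∧ 0 < s :=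
    (eventually_all.mpr haxes).and (eventually_gt_atTop 0)
  filter_upwards [eventually_forall_ge_atTop.mpr hfar] with R hR x hx hsum
  refine interior_maximal (fun y hy => ?_) (isOpen_setOf_pos_and_lt_sum R) ⟨hx, hsum⟩
  obtain ⟨hmem, hpos⟩ := hR _ hy.2.le
  exact mem_of_single_sum_mem_of_convex hP (fun i => (hy.1 i).le) hpos hmem

end Orthant

section NewtonPolyhedron

variable {d : ℕ} {S : Set (Fin d → ℕ)}

lemma expToReal_single (i : Fin d) (n : ℕ) :
    expToReal d (Pi.single i n) = Pi.single i (n : ℝ) := by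
  ext j
  simp [expToReal, Pi.single_apply]

lemma eventually_single_mem_newtonPoly {i : Fin d} (hS : ∃ᶠ n in atTop, Pi.single i n ∈ S) :
    ∀ᶠ t in atTop, Pi.single i t ∈ newtonPoly d S := by
  have hconn : {t : ℝ | Pi.single i t ∈ newtonPoly d S}.OrdConnected :=
    ((convex_convexHull ℝ _).linear_preimage (LinearMap.single ℝ (fun _ => ℝ) i)).ordConnected
  refine eventually_atTop_mem_of_frequently_of_ordConnected hconn ?_
  refine tendsto_natCast_atTop_atTop.frequently (hS.mono fun n hn => ?_)
  exact subset_convexHull ℝ _ ⟨_, hn, expToReal_single i n⟩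

/-- By Howald's theorem, this says that the multiplier ideal `𝒥(𝔞^c)` of a monomial ideal `𝔞`
with exponent set `S` is cofinite. -/
theorem multiplicity_finite_general (hS : ∀ i, ∃ᶠ n in atTop, Pi.single i n ∈ S) {c : ℝ}
    (hc : 0 < c) : {v : Fin d → ℕ | expToReal d v + 1 ∉ interior (c • newtonPoly d S)}.Finite := by
  have hinterior := eventually_mem_interior_of_lt_sum_of_convex
    ((convex_convexHull ℝ (expToReal d '' S)).smul c)
    fun i => eventually_single_mem_smul hc (eventually_single_mem_newtonPoly (hS i))
  obtain ⟨R, hR⟩ := hinterior.exists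
  have hsum : Tendsto (fun v : Fin d → ℕ => ((∑ i, v i : ℕ) : ℝ)) cofinite atTop :=
    tendsto_natCast_atTop_atTop.comp (tendsto_sum_cofinite_atTop (Fin d))
  refine eventually_cofinite.mp ?_
  filter_upwards [hsum.eventually_gt_atTop R] with v hv
  refine hR _ (fun i => Nat.cast_add_one_pos (v i)) ?_
  calc R < ((∑ i, v i : ℕ) : ℝ) := hv
    _ = ∑ i, expToReal d v i := Nat.cast_sum _ _
    _ ≤ ∑ i, (expToReal d v + 1) i := Finset.sum_le_sum fun i _ => (lt_add_one _).le

end NewtonPolyhedron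

/-- Finiteness of the multiplicity (implicit in Theorem 5.2 and Lemma 5.3): for a cofinite
monomial ideal and any `c > 0`, only finitely many `v ∈ ℕ^d` have `v + 𝟏` on the boundary
part `c•P(𝔞) \ int(c•P(𝔞))` of the dilated Newton polyhedron. -/
theorem multiplicity_finite (d : ℕ) (hd : 1 ≤ d) (k : Type*) [Field k]
    (S : Set (Fin d → ℕ)) (hS : ∀ v ∈ S, ∀ w : Fin d → ℕ, v + w ∈ S)
    (hcof : (Sᶜ : Set (Fin d → ℕ)).Finite)
    (c : ℝ) (hc : 0 < c) :
    {v : Fin d → ℕ |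
      expToReal d v + 1 ∈ c • newtonPoly d S \ interior (c • newtonPoly d S)}.Finite :=
  (multiplicity_finite_general (frequently_single_mem_of_finite_compl hcof) hc).subset
    fun _ hv => hv.2
end
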